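/- arXiv:1406.6742 — 10 statements merged into one kernel-verified Lean document; each statement's English description precedes it below -/
import Mathlib

section
/- Let H be a real Hilbert space and n ≥ 2. There exists a map r : H(n) → H(n−1) such that r(S) = S for every S ∈ H(n−1) (i.e., every nonempty subset S of H with at most n−1 elements), and r is Lipschitz with respect to the Hausdorff metric: d_H(r(S), r(T)) ≤ max(n^{3/2}, 2n−1) · d_H(S, T) for all S, T ∈ H(n). -/
open scoped InnerProductSpace

section ProxAux

set_option linter.unusedSectionVars false

/-- Existence of the proximal point of a convex continuous nonnegative function. -/
lemma exists_prox {E : Type*} [NormedAddCommGroup E] [InnerProductSpace ℝ E] [CompleteSpace E]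
    (f : E → ℝ) (hc : ConvexOn ℝ Set.univ f) (hcont : Continuous f) (h0 : ∀ w, 0 ≤ f w) (x : E) :
    ∃ u : E, ∀ w, 2 * ⟪x - u, w - u⟫_ℝ ≤ f w - f u := by
  set F : E → ℝ := fun w => f w + ‖w - x‖ ^ 2 with hF
  have hFcont : Continuous F := by fun_prop
  have hbdd : BddBelow (Set.range F) :=
    ⟨0, by rintro _ ⟨w, rfl⟩; have := h0 w; simp only [hF]; positivity⟩
  set m : ℝ := ⨅ w, F w with hm
  have hmle : ∀ w, m ≤ F w := fun w => ciInf_le hbdd w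
  have hseq : ∀ k : ℕ, ∃ w, F w < m + 1 / ((k : ℝ) + 1) := fun k =>
    exists_lt_of_ciInf_lt (by have : (0:ℝ) < 1 / ((k : ℝ) + 1) := by positivity
                              linarith)
  choose s hs using hseq
  have hmid : ∀ a b, ‖a - b‖ ^ 2 ≤ 2 * (F a - m) + 2 * (F b - m) := by
    intro a b
    have h1 := hmle ((1/2 : ℝ) • a + (1/2 : ℝ) • b)
    have h2 := hc.2 (Set.mem_univ a) (Set.mem_univ b) (by norm_num : (0:ℝ) ≤ 1/2)
      (by norm_num : (0:ℝ) ≤ 1/2) (by norm_num)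
    have h3 := parallelogram_law_with_norm ℝ (a - x) (b - x)
    have e1 : a - x - (b - x) = a - b := by abel
    have e2 : (1/2 : ℝ) • a + (1/2 : ℝ) • b - x = (1/2 : ℝ) • ((a - x) + (b - x)) := by module
    simp only [hF] at h1 ⊢
    rw [e2, norm_smul] at h1
    rw [e1] at h3
    simp only [smul_eq_mul] at h2
    norm_num at h1
    nlinarith
  have hcau : CauchySeq s := by
    rw [Metric.cauchySeq_iff']
    intro ε hε
    obtain ⟨N, hN⟩ := exists_nat_one_div_lt (show (0:ℝ) < ε ^ 2 / 4 by positivity)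
    refine ⟨N, fun k hk => ?_⟩
    have h1 := hmid (s k) (s N)
    have h2 := hs k
    have h3 := hs N
    have h4 : 1 / ((k : ℝ) + 1) ≤ 1 / ((N : ℝ) + 1) := Nat.one_div_le_one_div hk
    rw [dist_eq_norm]
    refine lt_of_pow_lt_pow_left₀ 2 hε.le ?_
    linarith
  obtain ⟨u, hu⟩ := cauchySeq_tendsto_of_complete hcau
  have hFu : F u ≤ m := by
    have h1 : Filter.Tendsto (fun k => F (s k)) Filter.atTop (nhds (F u)) :=
      (hFcont.tendsto u).comp hu
    have h2 : Filter.Tendsto (fun k : ℕ => m + 1 / ((k : ℝ) + 1)) Filter.atTop (nhds (m + 0)) :=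
      tendsto_const_nhds.add tendsto_one_div_add_atTop_nhds_zero_nat
    rw [add_zero] at h2
    exact le_of_tendsto_of_tendsto' h1 h2 (fun k => (hs k).le)
  refine ⟨u, fun w => ?_⟩
  have key : ∀ t : ℝ, 0 < t → t < 1 →
      2 * ⟪x - u, w - u⟫_ℝ ≤ f w - f u + t * ‖w - u‖ ^ 2 := by
    intro t ht ht1
    have h1 := hFu.trans (hmle ((1 - t) • u + t • w))
    have h2 := hc.2 (Set.mem_univ u) (Set.mem_univ w) (by linarith : (0:ℝ) ≤ 1 - t) ht.le
      (by ring)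
    have e : (1 - t) • u + t • w - x = (u - x) + t • (w - u) := by module
    simp only [hF] at h1
    rw [e, norm_add_sq_real, norm_smul, inner_smul_right] at h1
    simp only [smul_eq_mul] at h2
    have e3 : ⟪u - x, w - u⟫_ℝ = - ⟪x - u, w - u⟫_ℝ := by rw [← inner_neg_left, neg_sub]
    rw [e3, mul_pow, Real.norm_eq_abs, sq_abs] at h1
    have : t * (2 * ⟪x - u, w - u⟫_ℝ) ≤ t * (f w - f u + t * ‖w - u‖ ^ 2) := by nlinarith
    exact le_of_mul_le_mul_left this ht
  refine le_of_forall_pos_le_add fun ε hε => ?_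
  have hC : 0 ≤ ‖w - u‖ ^ 2 := by positivity
  set t : ℝ := min (1/2) (ε / (‖w - u‖ ^ 2 + 1)) with ht
  have htp : 0 < t := by rw [ht]; positivity
  have ht1 : t < 1 := lt_of_le_of_lt (min_le_left _ _) (by norm_num)
  have := key t htp ht1
  have h2 : t * ‖w - u‖ ^ 2 ≤ ε := by
    have h3 : t ≤ ε / (‖w - u‖ ^ 2 + 1) := min_le_right _ _
    rw [le_div_iff₀ (by positivity)] at h3
    nlinarith
  linarith

variable {H : Type*} [NormedAddCommGroup H] [InnerProductSpace ℝ H] {n : ℕ}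

/-- Sum of all pairwise distances (each pair counted twice). -/
noncomputable def pairSum (u : PiLp 2 (fun _ : Fin n => H)) : ℝ := ∑ k, ∑ l, ‖u k - u l‖

/-- `a` is a subgradient at `u` of half of `pairSum`. -/
def IsSub (u a : PiLp 2 (fun _ : Fin n => H)) : Prop :=
  ∀ w, 2 * ⟪a, w - u⟫_ℝ ≤ pairSum w - pairSum u

lemma pairSum_convex : ConvexOn ℝ Set.univ (pairSum (H := H) (n := n)) := by
  refine ⟨convex_univ, fun u _ v _ a b ha hb _ => ?_⟩
  simp only [pairSum, smul_eq_mul, Finset.mul_sum, ← Finset.sum_add_distrib]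
  refine Finset.sum_le_sum fun k _ => Finset.sum_le_sum fun l _ => ?_
  have e : (a • u + b • v) k - (a • u + b • v) l = a • (u k - u l) + b • (v k - v l) := by
    simp only [PiLp.add_apply, PiLp.smul_apply]; module
  rw [e]
  refine (norm_add_le _ _).trans ?_
  rw [norm_smul, norm_smul, Real.norm_of_nonneg ha, Real.norm_of_nonneg hb]

lemma pairSum_continuous : Continuous (pairSum (H := H) (n := n)) := by
  unfold pairSum
  fun_prop

lemma pairSum_nonneg (u : PiLp 2 (fun _ : Fin n => H)) : 0 ≤ pairSum u := by
  unfold pairSum; positivity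

lemma exists_sub [CompleteSpace H] (x : PiLp 2 (fun _ : Fin n => H)) {τ : ℝ} (hτ : 0 < τ) :
    ∃ u a, IsSub u a ∧ x = u + τ • a := by
  obtain ⟨u, hu⟩ := exists_prox (fun w => τ * pairSum w)
    (by simpa [smul_eq_mul] using pairSum_convex.smul hτ.le) (pairSum_continuous.const_mul τ)
    (fun w => mul_nonneg hτ.le (pairSum_nonneg w)) x
  refine ⟨u, τ⁻¹ • (x - u), fun w => ?_, ?_⟩
  · have := hu w
    rw [real_inner_smul_left]
    have h2 : τ * (2 * (τ⁻¹ * ⟪x - u, w - u⟫_ℝ)) ≤ τ * (pairSum w - pairSum u) := by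
      field_simp
      linarith
    exact le_of_mul_le_mul_left h2 hτ
  · rw [smul_smul, mul_inv_cancel₀ hτ.ne']; simp

lemma IsSub.norm_apply_le {u a : PiLp 2 (fun _ : Fin n => H)} (h : IsSub u a) (i : Fin n) :
    ‖a i‖ ≤ (n : ℝ) - 1 := by
  have hn : (1 : ℝ) ≤ n := by
    have : 0 < n := i.pos
    exact_mod_cast this
  have h1 := h (u + WithLp.toLp 2 (Pi.single i (a i)))
  rw [add_sub_cancel_left, PiLp.inner_apply] at h1
  have h2 : ∑ k, ⟪a k, (WithLp.toLp 2 (Pi.single i (a i)) : PiLp 2 (fun _ : Fin n => H)) k⟫_ℝ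
      = ‖a i‖ ^ 2 := by
    rw [Finset.sum_eq_single i]
    · simp
    · intro b _ hb; simp [Pi.single_eq_of_ne hb]
    · simp
  rw [h2] at h1
  have h3 : pairSum (u + WithLp.toLp 2 (Pi.single i (a i))) - pairSum u ≤
      ∑ k, ∑ l, ((if k = i then (if l = i then 0 else ‖a i‖) else 0)
        + (if l = i then (if k = i then 0 else ‖a i‖) else 0)) := by
    simp only [pairSum, ← Finset.sum_sub_distrib]
    refine Finset.sum_le_sum fun k _ => Finset.sum_le_sum fun l _ => ?_
    refine (norm_sub_norm_le _ _).trans ?_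
    simp only [PiLp.add_apply]
    by_cases hk : k = i <;> by_cases hl : l = i
    · subst hk; subst hl; simp
    · subst hk; simp [hl]
    · subst hl; simp [hk]
    · simp [hk, hl]
  have h4 : ∑ l : Fin n, (if l = i then (0:ℝ) else ‖a i‖) = ((n : ℝ) - 1) * ‖a i‖ := by
    have : ∀ l : Fin n, (if l = i then (0:ℝ) else ‖a i‖)
        = ‖a i‖ - (if l = i then ‖a i‖ else 0) := by
      intro l; split_ifs <;> simp
    simp only [this, Finset.sum_sub_distrib]
    simp; ring
  have h5 : ∑ k, ∑ l, ((if k = i then (if l = i then 0 else ‖a i‖) else 0)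
        + (if l = i then (if k = i then 0 else ‖a i‖) else 0)) = 2 * (((n : ℝ) - 1) * ‖a i‖) := by
    simp only [Finset.sum_add_distrib]
    rw [Finset.sum_eq_single i (by intro b _ hb; simp [hb]) (by simp)]
    simp only [if_true, h4, Finset.sum_ite_eq', Finset.mem_univ]
    ring
  rw [h5] at h3
  by_contra hcon
  push Not at hcon
  have : 0 < ‖a i‖ := by linarith
  nlinarith

lemma IsSub.norm_le {u a : PiLp 2 (fun _ : Fin n => H)} (h : IsSub u a) (hn : 1 ≤ n) :
    ‖a‖ ≤ √n * ((n : ℝ) - 1) := by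
  have hn' : (1 : ℝ) ≤ n := by exact_mod_cast hn
  rw [PiLp.norm_eq_of_L2]
  have : √n * ((n : ℝ) - 1) = √(∑ _i : Fin n, ((n : ℝ) - 1) ^ 2) := by
    simp only [Finset.sum_const, Finset.card_univ, Fintype.card_fin, nsmul_eq_mul]
    rw [Real.sqrt_mul (by positivity), Real.sqrt_sq (by linarith)]
  rw [this]
  refine Real.sqrt_le_sqrt (Finset.sum_le_sum fun i _ => ?_)
  exact pow_le_pow_left₀ (norm_nonneg _) (h.norm_apply_le i) 2

lemma norm_le_sqrt_mul {z : PiLp 2 (fun _ : Fin n => H)} {d : ℝ} (hd : 0 ≤ d)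
    (h : ∀ i, ‖z i‖ ≤ d) : ‖z‖ ≤ √n * d := by
  rw [PiLp.norm_eq_of_L2]
  have : √n * d = √(∑ _i : Fin n, d ^ 2) := by
    simp only [Finset.sum_const, Finset.card_univ, Fintype.card_fin, nsmul_eq_mul]
    rw [Real.sqrt_mul (by positivity), Real.sqrt_sq hd]
  rw [this]
  refine Real.sqrt_le_sqrt (Finset.sum_le_sum fun i _ => ?_)
  exact pow_le_pow_left₀ (norm_nonneg _) (h i) 2

lemma pairSum_perm (u : PiLp 2 (fun _ : Fin n => H)) (σ : Equiv.Perm (Fin n)) :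
    pairSum (WithLp.toLp 2 (fun k => u (σ k)) : PiLp 2 (fun _ : Fin n => H)) = pairSum u := by
  simp only [pairSum]
  rw [← Equiv.sum_comp σ (fun k => ∑ l, ‖u k - u l‖)]
  refine Finset.sum_congr rfl fun k _ => ?_
  rw [← Equiv.sum_comp σ (fun l => ‖u (σ k) - u l‖)]

lemma IsSub.perm {u a : PiLp 2 (fun _ : Fin n => H)} (h : IsSub u a) (σ : Equiv.Perm (Fin n)) :
    IsSub (WithLp.toLp 2 (fun k => u (σ k)) : PiLp 2 (fun _ : Fin n => H))
      (WithLp.toLp 2 (fun k => a (σ k))) := by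
  intro w
  have h1 := h (WithLp.toLp 2 (fun k => w (σ.symm k)))
  rw [pairSum_perm w σ.symm] at h1
  rw [pairSum_perm u σ]
  refine le_trans (le_of_eq ?_) h1
  rw [PiLp.inner_apply, PiLp.inner_apply]
  congr 1
  rw [← Equiv.sum_comp σ (fun k => ⟪a k, _⟫_ℝ)]
  simp

lemma IsSub.pair {u a : PiLp 2 (fun _ : Fin n => H)} (h : IsSub u a) {i j : Fin n} (hij : i ≠ j) :
    2 * ‖u i - u j‖ ≤ ⟪a i - a j, u i - u j⟫_ℝ := by
  classical
  set v : PiLp 2 (fun _ : Fin n => H) := WithLp.toLp 2 (fun k => u (Equiv.swap i j k)) with hv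
  set w : PiLp 2 (fun _ : Fin n => H) := (1/2 : ℝ) • u + (1/2 : ℝ) • v with hw
  have hvi : v i = u j := by simp [hv]
  have hvj : v j = u i := by simp [hv]
  have hvk : ∀ k, k ≠ i → k ≠ j → v k = u k := by
    intro k h1 h2; simp [hv, Equiv.swap_apply_of_ne_of_ne h1 h2]
  have hpv : pairSum v = pairSum u := pairSum_perm u _
  have hS : pairSum w ≤ pairSum u - 2 * ‖u i - u j‖ := by
    have h1 : pairSum w ≤ ∑ k, ∑ l, ((1/2 * ‖u k - u l‖ + 1/2 * ‖v k - v l‖)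
        - ((if k = i then (if l = j then ‖u i - u j‖ else 0) else 0)
          + (if k = j then (if l = i then ‖u i - u j‖ else 0) else 0))) := by
      unfold pairSum
      refine Finset.sum_le_sum fun k _ => Finset.sum_le_sum fun l _ => ?_
      have e : w k - w l = (1/2 : ℝ) • (u k - u l) + (1/2 : ℝ) • (v k - v l) := by
        simp only [hw, PiLp.add_apply, PiLp.smul_apply]; module
      have hgen : ‖w k - w l‖ ≤ 1/2 * ‖u k - u l‖ + 1/2 * ‖v k - v l‖ := by
        rw [e]
        refine (norm_add_le _ _).trans (le_of_eq ?_)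
        rw [norm_smul, norm_smul]; norm_num
      by_cases c1 : k = i ∧ l = j
      · obtain ⟨rfl, rfl⟩ := c1
        have : w k - w l = 0 := by rw [e, hvi, hvj]; module
        rw [this, hvi, hvj, norm_sub_rev (u l)]
        simp [hij]; linarith
      · by_cases c2 : k = j ∧ l = i
        · obtain ⟨rfl, rfl⟩ := c2
          have : w k - w l = 0 := by rw [e, hvi, hvj]; module
          rw [this, hvi, hvj, norm_sub_rev (u l)]
          simp [hij.symm]; linarith
        · have z1 : (if k = i then (if l = j then ‖u i - u j‖ else 0) else 0) = 0 := by
            split_ifs <;> simp_all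
          have z2 : (if k = j then (if l = i then ‖u i - u j‖ else 0) else 0) = 0 := by
            split_ifs <;> simp_all
          rw [z1, z2]; linarith
    refine h1.trans (le_of_eq ?_)
    simp only [Finset.sum_sub_distrib, Finset.sum_add_distrib, ← Finset.mul_sum]
    have e1 : ∑ k, ∑ l, ‖u k - u l‖ = pairSum u := rfl
    have e2 : ∑ k, ∑ l, ‖v k - v l‖ = pairSum u := hpv
    have e3 : ∑ k, ∑ l, (if k = i then (if l = j then ‖u i - u j‖ else 0) else 0)
        = ‖u i - u j‖ := by
      rw [Finset.sum_eq_single i (by intro b _ hb; simp [hb]) (by simp)]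
      simp
    have e4 : ∑ k, ∑ l, (if k = j then (if l = i then ‖u i - u j‖ else 0) else 0)
        = ‖u i - u j‖ := by
      rw [Finset.sum_eq_single j (by intro b _ hb; simp [hb]) (by simp)]
      simp
    rw [e1, e2, e3, e4]; ring
  have h1 := h w
  have h2 : ⟪a, w - u⟫_ℝ = - (1/2) * ⟪a i - a j, u i - u j⟫_ℝ := by
    have e : w - u = (1/2 : ℝ) • (v - u) := by rw [hw]; module
    rw [e, inner_smul_right, PiLp.inner_apply,
      Finset.sum_eq_add (a := i) (b := j) hij]
    · simp only [PiLp.sub_apply, hvi, hvj, inner_sub_left, inner_sub_right]; ring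
    · rintro c _ ⟨c1, c2⟩; simp [hvk c c1 c2]
    · simp
    · simp
  rw [h2] at h1
  linarith

/-- A pair at distance at most `2 τ` is merged by the proximal map. -/
lemma IsSub.merge {x u a : PiLp 2 (fun _ : Fin n => H)} (h : IsSub u a) {τ : ℝ} (hτ : 0 ≤ τ)
    (hx : x = u + τ • a) {i j : Fin n} (hij : i ≠ j) (hd : ‖x i - x j‖ ≤ 2 * τ) : u i = u j := by
  have h1 := h.pair hij
  by_contra hne
  have hq : 0 < ‖u i - u j‖ := norm_pos_iff.2 (sub_ne_zero.2 hne)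
  have h2 : x i - x j = (u i - u j) + τ • (a i - a j) := by
    rw [hx]; simp only [PiLp.add_apply, PiLp.smul_apply]; module
  have h3 : ⟪x i - x j, u i - u j⟫_ℝ = ‖u i - u j‖ ^ 2 + τ * ⟪a i - a j, u i - u j⟫_ℝ := by
    rw [h2, inner_add_left, real_inner_smul_left, real_inner_self_eq_norm_sq]
  have h4 := real_inner_le_norm (x i - x j) (u i - u j)
  nlinarith

lemma IsSub.compare {x u a y v b : PiLp 2 (fun _ : Fin n => H)} (h : IsSub u a) (h' : IsSub v b)
    {τ σ : ℝ} (hτ : 0 ≤ τ) (hx : x = u + τ • a) (hy : y = v + σ • b) :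
    ‖u - v‖ ≤ ‖x - y‖ + |τ - σ| * ‖b‖ := by
  have h1 := h v
  have h2 := h' u
  have e0 : ⟪a, v - u⟫_ℝ = - ⟪a, u - v⟫_ℝ := by rw [← inner_neg_right, neg_sub]
  have hmono : 0 ≤ ⟪a - b, u - v⟫_ℝ := by
    rw [inner_sub_left]; rw [e0] at h1; linarith
  have e : u - v = ((x - y) - (τ - σ) • b) - τ • (a - b) := by rw [hx, hy]; module
  have h3 : ‖u - v‖ ^ 2 = ⟪(x - y) - (τ - σ) • b, u - v⟫_ℝ - τ * ⟪a - b, u - v⟫_ℝ := by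
    rw [← real_inner_self_eq_norm_sq, ← real_inner_smul_left, ← inner_sub_left, ← e]
  have h4 := real_inner_le_norm ((x - y) - (τ - σ) • b) (u - v)
  have h5 : ‖(x - y) - (τ - σ) • b‖ ≤ ‖x - y‖ + |τ - σ| * ‖b‖ := by
    refine (norm_sub_le _ _).trans (le_of_eq ?_)
    rw [norm_smul, Real.norm_eq_abs]
  by_contra hcon
  push Not at hcon
  have h6 : 0 < ‖u - v‖ := lt_of_le_of_lt (by positivity) hcon
  have h7 := mul_nonneg hτ hmono
  nlinarith

/-- `R` is obtained from `S` by the proximal map at time half the separation of `S`. -/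
def IsGood (n : ℕ) (S R : Set H) : Prop :=
  ∃ x u a : PiLp 2 (fun _ : Fin n => H), Function.Injective (fun i => x i) ∧
    Set.range (fun i => x i) = S ∧ Set.range (fun i => u i) = R ∧ IsSub u a ∧
    x = u + (S.infsep / 2) • a

lemma exists_good [CompleteSpace H] (hn : 2 ≤ n) {S : Set H} (hS : S.Finite)
    (hc : S.ncard = n) : ∃ R, IsGood n S R := by
  have hnt : S.Nontrivial := by
    exact (Set.one_lt_ncard_iff_nontrivial_and_finite.1 (by omega)).1
  have hpos : 0 < S.infsep := (hS.infsep_pos_iff_nontrivial).2 hnt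
  have : Finite S := hS
  have hcard : Nat.card S = n := hc
  let e : S ≃ Fin n := Finite.equivFinOfCardEq hcard
  obtain ⟨u, a, h1, h2⟩ := exists_sub
    (WithLp.toLp 2 (fun i => (e.symm i : H)) : PiLp 2 (fun _ : Fin n => H)) (half_pos hpos)
  refine ⟨_, _, u, a, ?_, ?_, rfl, h1, h2⟩
  · intro i j hij
    exact e.symm.injective (Subtype.ext hij)
  · ext z
    constructor
    · rintro ⟨i, rfl⟩; exact (e.symm i).2
    · intro hz; exact ⟨e ⟨z, hz⟩, by simp⟩

lemma IsGood.with_enum {S R : Set H} (h : IsGood n S R) (y : PiLp 2 (fun _ : Fin n => H))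
    (hy : Function.Injective (fun i => y i)) (hyS : Set.range (fun i => y i) = S) :
    ∃ u a : PiLp 2 (fun _ : Fin n => H), Set.range (fun i => u i) = R ∧ IsSub u a ∧
      y = u + (S.infsep / 2) • a := by
  obtain ⟨x, u, a, hx, hxS, huR, hs, hxe⟩ := h
  have h1 : ∀ i, ∃ j, x j = y i := by
    intro i
    have : y i ∈ Set.range (fun i => x i) := by rw [hxS, ← hyS]; exact ⟨i, rfl⟩
    exact this
  choose s hs' using h1
  have hinj : Function.Injective s := by
    intro i j hij
    apply hy
    show y i = y j
    rw [← hs' i, ← hs' j, hij]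
  let σ : Equiv.Perm (Fin n) := Equiv.ofBijective s (Finite.injective_iff_bijective.1 hinj)
  refine ⟨_, _, ?_, hs.perm σ, ?_⟩
  · rw [← huR]
    exact σ.surjective.range_comp (fun i => u i)
  · ext i
    have : y i = x (σ i) := (hs' i).symm
    rw [this, hxe]
    simp

lemma IsGood.nonempty (hn : 2 ≤ n) {S R : Set H} (h : IsGood n S R) : R.Nonempty := by
  obtain ⟨x, u, a, hx, hxS, huR, hs, hxe⟩ := h
  rw [← huR]; exact ⟨_, ⟨0, by omega⟩, rfl⟩

lemma IsGood.finite {S R : Set H} (h : IsGood n S R) : R.Finite := by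
  obtain ⟨x, u, a, hx, hxS, huR, hs, hxe⟩ := h
  rw [← huR]; exact Set.finite_range _

lemma IsGood.ncard_le (hn : 2 ≤ n) {S R : Set H} (hS : S.Finite) (hc : S.ncard = n)
    (h : IsGood n S R) : R.ncard ≤ n - 1 := by
  classical
  have hnt : S.Nontrivial := by
    exact (Set.one_lt_ncard_iff_nontrivial_and_finite.1 (by omega)).1
  obtain ⟨p, hp, q, hq, hpq, hd⟩ := hS.infsep_exists_of_nontrivial hnt
  obtain ⟨x, u, a, hx, hxS, huR, hs, hxe⟩ := h
  rw [← hxS] at hp hq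
  obtain ⟨i, rfl⟩ := hp
  obtain ⟨j, rfl⟩ := hq
  have hij : i ≠ j := fun e => hpq (by rw [e])
  have hm : u i = u j := hs.merge (by have := S.infsep_nonneg; positivity) hxe hij (by
    rw [hd, dist_eq_norm]; linarith)
  have : R ⊆ (fun k => u k) '' ((Finset.univ.erase i : Finset (Fin n)) : Set (Fin n)) := by
    rw [← huR]
    rintro _ ⟨k, rfl⟩
    by_cases hk : k = i
    · exact ⟨j, by simp [hij.symm], by simp [hk, hm]⟩
    · exact ⟨k, by simp [hk], rfl⟩
  refine (Set.ncard_le_ncard this (Set.toFinite _)).trans ?_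
  refine (Set.ncard_image_le (Set.toFinite _)).trans ?_
  rw [Set.ncard_coe_finset, Finset.card_erase_of_mem (Finset.mem_univ _)]
  simp

lemma IsGood.dist_le (hn : 2 ≤ n) {S R : Set H} (h : IsGood n S R) :
    Metric.hausdorffDist R S ≤ ((n : ℝ) - 1) * (S.infsep / 2) := by
  have hn' : (2 : ℝ) ≤ n := by exact_mod_cast hn
  have h0 := S.infsep_nonneg
  obtain ⟨x, u, a, hx, hxS, huR, hs, hxe⟩ := h
  have key : ∀ i, dist (u i) (x i) ≤ ((n : ℝ) - 1) * (S.infsep / 2) := by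
    intro i
    have e : u i - x i = - ((S.infsep / 2) • a i) := by
      conv_lhs => rw [hxe]
      simp
    rw [dist_eq_norm, e, norm_neg, norm_smul, Real.norm_of_nonneg (by positivity), mul_comm]
    exact mul_le_mul_of_nonneg_right (hs.norm_apply_le i) (by positivity)
  refine Metric.hausdorffDist_le_of_mem_dist (mul_nonneg (by linarith) (by linarith)) ?_ ?_
  · rw [← huR]
    rintro _ ⟨i, rfl⟩
    exact ⟨x i, by rw [← hxS]; exact ⟨i, rfl⟩, key i⟩
  · intro z hz
    rw [← hxS] at hz
    obtain ⟨i, rfl⟩ := hz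
    exact ⟨u i, by rw [← huR]; exact ⟨i, rfl⟩, by rw [dist_comm]; exact key i⟩

lemma exists_near {S T : Set H} (hS : S.Nonempty) (hSf : S.Finite) (hT : T.Nonempty)
    (hTf : T.Finite) {p : H} (hp : p ∈ S) : ∃ q ∈ T, dist p q ≤ Metric.hausdorffDist S T := by
  obtain ⟨q, hq, he⟩ := hTf.isCompact.exists_infDist_eq_dist hT p
  refine ⟨q, hq, he ▸ ?_⟩
  exact Metric.infDist_le_hausdorffDist_of_mem hp
    (Metric.hausdorffEDist_ne_top_of_nonempty_of_bounded hS hT hSf.isBounded hTf.isBounded)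

/-- The near case: `S` and `T` are matched bijectively. -/
lemma near_case (hn : 2 ≤ n) {S T : Set H} (hSf : S.Finite) (hTf : T.Finite) (hT : T.Nonempty)
    (hSc : S.ncard = n) (hTc : T.ncard ≤ n)
    (hd : 2 * Metric.hausdorffDist S T < S.infsep) :
    T.ncard = n ∧ ∀ R Q, IsGood n S R → IsGood n T Q →
      Metric.hausdorffDist R Q ≤ ((n : ℝ) * √n) * Metric.hausdorffDist S T := by
  have hn' : (2 : ℝ) ≤ n := by exact_mod_cast hn
  have hS : S.Nonempty := Set.nonempty_of_ncard_ne_zero (by omega)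
  set d := Metric.hausdorffDist S T with hdd
  have hd0 : 0 ≤ d := Metric.hausdorffDist_nonneg
  have hnear : ∀ p : H, ∃ q, p ∈ S → q ∈ T ∧ dist p q ≤ d := by
    intro p
    by_cases hp : p ∈ S
    · obtain ⟨q, h1, h2⟩ := exists_near hS hSf hT hTf hp
      exact ⟨q, fun _ => ⟨h1, h2⟩⟩
    · exact ⟨p, fun h => absurd h hp⟩
  choose f hf using hnear
  have hfinj : Set.InjOn f S := by
    intro p hp q hq hpq
    by_contra hne
    have h1 := S.infsep_le_dist_of_mem hp hq hne
    have h2 := (hf p hp).2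
    have h3 := (hf q hq).2
    rw [hpq] at h2
    have := dist_triangle_right p q (f q)
    linarith
  have himsub : f '' S ⊆ T := by rintro _ ⟨p, hp, rfl⟩; exact (hf p hp).1
  have himc : (f '' S).ncard = n := by rw [hfinj.ncard_image, hSc]
  have him : f '' S = T := Set.eq_of_subset_of_ncard_le himsub (by omega) hTf
  have hTn : T.ncard = n := by rw [← him, himc]
  refine ⟨hTn, fun R Q hR hQ => ?_⟩
  have hSnt : S.Nontrivial := by
    exact (Set.one_lt_ncard_iff_nontrivial_and_finite.1 (by omega)).1
  have hTnt : T.Nontrivial := by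
    exact (Set.one_lt_ncard_iff_nontrivial_and_finite.1 (by omega)).1
  have hsep1 : T.infsep ≤ S.infsep + 2 * d := by
    obtain ⟨p, hp, q, hq, hpq, he⟩ := hSf.infsep_exists_of_nontrivial hSnt
    have h1 := T.infsep_le_dist_of_mem (hf p hp).1 (hf q hq).1
      (fun e => hpq (hfinj hp hq e))
    have h2 := (hf p hp).2
    have h3 := (hf q hq).2
    have h4 := dist_triangle4_left p (f p) q (f q)
    have h5 := dist_triangle4 (f p) p q (f q)
    rw [dist_comm (f p) p] at h5
    linarith
  have hsep2 : S.infsep ≤ T.infsep + 2 * d := by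
    obtain ⟨p', hp', q', hq', hpq, he⟩ := hTf.infsep_exists_of_nontrivial hTnt
    rw [← him] at hp' hq'
    obtain ⟨p, hp, rfl⟩ := hp'
    obtain ⟨q, hq, rfl⟩ := hq'
    have h1 := S.infsep_le_dist_of_mem hp hq (fun e => hpq (by rw [e]))
    have h2 := (hf p hp).2
    have h3 := (hf q hq).2
    have h5 := dist_triangle4 p (f p) (f q) q
    rw [dist_comm (f q) q] at h5
    linarith
  obtain ⟨x, u, a, hx, hxS, huR, hs, hxe⟩ := hR
  have hxm : ∀ i, x i ∈ S := fun i => by rw [← hxS]; exact ⟨i, rfl⟩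
  set y : PiLp 2 (fun _ : Fin n => H) := WithLp.toLp 2 (fun i => f (x i)) with hy
  obtain ⟨v, b, hvQ, hs', hye⟩ := hQ.with_enum y
    (fun i j hij => hx (hfinj (hxm i) (hxm j) hij))
    (by rw [← him, ← hxS, ← Set.range_comp]; rfl)
  have hS0 := S.infsep_nonneg
  have h1 := hs.compare hs' (by positivity) hxe hye
  have h2 : ‖x - y‖ ≤ √n * d := norm_le_sqrt_mul hd0 (fun i => by
    have := (hf (x i) (hxm i)).2
    rw [dist_eq_norm] at this
    exact this)
  have h3 := hs'.norm_le (by omega)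
  have h4 : |S.infsep / 2 - T.infsep / 2| ≤ d := by rw [abs_le]; constructor <;> linarith
  have h5 : |S.infsep / 2 - T.infsep / 2| * ‖b‖ ≤ d * (√n * ((n : ℝ) - 1)) :=
    mul_le_mul h4 h3 (norm_nonneg _) hd0
  have h6 : ‖u - v‖ ≤ ((n : ℝ) * √n) * d := by linarith
  have key : ∀ i, dist (u i) (v i) ≤ ((n : ℝ) * √n) * d := fun i => by
    rw [dist_eq_norm]
    exact (PiLp.norm_apply_le (u - v) i).trans h6
  refine Metric.hausdorffDist_le_of_mem_dist (by positivity) ?_ ?_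
  · rw [← huR]
    rintro _ ⟨i, rfl⟩
    exact ⟨v i, by rw [← hvQ]; exact ⟨i, rfl⟩, key i⟩
  · rw [← hvQ]
    rintro _ ⟨i, rfl⟩
    exact ⟨u i, by rw [← huR]; exact ⟨i, rfl⟩, by rw [dist_comm]; exact key i⟩

end ProxAux


/-- **Theorem 1.1.** Let `H` be a real Hilbert space and `n ≥ 2`. There is a Lipschitz
retraction `r : H(n) → H(n−1)`, with Lipschitz constant `max (n^{3/2}) (2n−1)` for the
Hausdorff metric, which restricts to the identity on `H(n−1)`. Here `H(m)` is the
collection of nonempty subsets of `H` with at most `m` elements. -/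
theorem lipschitz_retraction_finite_subsets_hilbert
    {H : Type*} [NormedAddCommGroup H] [InnerProductSpace ℝ H] [CompleteSpace H]
    (n : ℕ) (hn : 2 ≤ n) :
    ∃ r : Set H → Set H,
      (∀ S : Set H, S.Nonempty → S.Finite → S.ncard ≤ n →
        (r S).Nonempty ∧ (r S).Finite ∧ (r S).ncard ≤ n - 1) ∧
      (∀ S : Set H, S.Nonempty → S.Finite → S.ncard ≤ n - 1 → r S = S) ∧
      (∀ S T : Set H, S.Nonempty → S.Finite → S.ncard ≤ n →
        T.Nonempty → T.Finite → T.ncard ≤ n →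
        Metric.hausdorffDist (r S) (r T) ≤
          max ((n : ℝ) ^ ((3 : ℝ) / 2)) (2 * (n : ℝ) - 1) * Metric.hausdorffDist S T) := by
  classical
  have hn' : (2 : ℝ) ≤ n := by exact_mod_cast hn
  have hex : ∀ S : Set H, ∃ R : Set H,
      (S.Finite ∧ S.ncard = n → IsGood n S R) ∧ (¬ (S.Finite ∧ S.ncard = n) → R = S) := by
    intro S
    by_cases h : S.Finite ∧ S.ncard = n
    · obtain ⟨R, hR⟩ := exists_good hn h.1 h.2
      exact ⟨R, fun _ => hR, fun h' => absurd h h'⟩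
    · exact ⟨S, fun h' => absurd h' h, fun _ => rfl⟩
  choose r hr1 hr2 using hex
  have hfst : ∀ S : Set H, S.Nonempty → S.Finite → S.ncard ≤ n →
        (r S).Nonempty ∧ (r S).Finite ∧ (r S).ncard ≤ n - 1 := by
    intro S hS hSf hSc
    by_cases h : S.ncard = n
    · have hg := hr1 S ⟨hSf, h⟩
      exact ⟨hg.nonempty hn, hg.finite, hg.ncard_le hn hSf h⟩
    · rw [hr2 S (fun h' => h h'.2)]
      exact ⟨hS, hSf, by omega⟩
  refine ⟨r, hfst, ?_, ?_⟩
  · intro S hS hSf hSc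
    exact hr2 S (fun h' => by omega)
  intro S T hS hSf hSc hT hTf hTc
  have hd0 : 0 ≤ Metric.hausdorffDist S T := Metric.hausdorffDist_nonneg
  have hpow : (n : ℝ) ^ ((3 : ℝ) / 2) = n * √n := by
    rw [show (3 : ℝ) / 2 = 1 + 1 / 2 by norm_num, Real.rpow_add (by linarith), Real.rpow_one,
      Real.sqrt_eq_rpow]
  rw [hpow]
  have hmax : (n : ℝ) * √n * Metric.hausdorffDist S T ≤
      max ((n : ℝ) * √n) (2 * (n : ℝ) - 1) * Metric.hausdorffDist S T :=
    mul_le_mul_of_nonneg_right (le_max_left _ _) hd0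
  by_cases c1 : S.ncard = n ∧ 2 * Metric.hausdorffDist S T < S.infsep
  · obtain ⟨hTn, hb⟩ := near_case hn hSf hTf hT c1.1 hTc c1.2
    exact (hb _ _ (hr1 S ⟨hSf, c1.1⟩) (hr1 T ⟨hTf, hTn⟩)).trans hmax
  by_cases c2 : T.ncard = n ∧ 2 * Metric.hausdorffDist T S < T.infsep
  · obtain ⟨hSn, hb⟩ := near_case hn hTf hSf hS c2.1 hSc c2.2
    have := hb _ _ (hr1 T ⟨hTf, c2.1⟩) (hr1 S ⟨hSf, hSn⟩)
    rw [Metric.hausdorffDist_comm, Metric.hausdorffDist_comm (s := T)] at this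
    exact this.trans hmax
  have hdisp : ∀ W : Set H, W.Finite →
      ¬ (W.ncard = n ∧ 2 * Metric.hausdorffDist S T < W.infsep) →
      Metric.hausdorffDist (r W) W ≤ ((n : ℝ) - 1) * Metric.hausdorffDist S T := by
    intro W hWf hW
    by_cases h : W.ncard = n
    · have h1 := (hr1 W ⟨hWf, h⟩).dist_le hn
      have h2 : W.infsep / 2 ≤ Metric.hausdorffDist S T := by
        by_contra hcon
        exact hW ⟨h, by linarith⟩
      exact h1.trans (mul_le_mul_of_nonneg_left h2 (by linarith))
    · rw [hr2 W (fun h' => h h'.2), Metric.hausdorffDist_self_zero]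
      exact mul_nonneg (by linarith) hd0
  have d1 := hdisp S hSf c1
  have d2 := hdisp T hTf (by rwa [Metric.hausdorffDist_comm] at c2)
  obtain ⟨rS1, rS2, -⟩ := hfst S hS hSf hSc
  obtain ⟨rT1, rT2, -⟩ := hfst T hT hTf hTc
  have t1 : Metric.hausdorffDist (r S) (r T) ≤
      Metric.hausdorffDist (r S) S + Metric.hausdorffDist S (r T) :=
    Metric.hausdorffDist_triangle
      (Metric.hausdorffEDist_ne_top_of_nonempty_of_bounded rS1 hS rS2.isBounded hSf.isBounded)
  have t2 : Metric.hausdorffDist S (r T) ≤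
      Metric.hausdorffDist S T + Metric.hausdorffDist T (r T) :=
    Metric.hausdorffDist_triangle
      (Metric.hausdorffEDist_ne_top_of_nonempty_of_bounded hS hT hSf.isBounded hTf.isBounded)
  rw [Metric.hausdorffDist_comm (s := T)] at t2
  have hmax2 : (2 * (n : ℝ) - 1) * Metric.hausdorffDist S T ≤
      max ((n : ℝ) * √n) (2 * (n : ℝ) - 1) * Metric.hausdorffDist S T :=
    mul_le_mul_of_nonneg_right (le_max_right _ _) hd0
  linarith
end

section
/- For all integers d ≥ 1 and n ≥ 1, the space ℝ^d(n) is an absolute Lipschitz retract: for every metric space Y and every isometric embedding ι : ℝ^d(n) → Y, there exists a constant L and an L-Lipschitz map r : Y → ℝ^d(n) such that r(ι(S)) = S for every S ∈ ℝ^d(n). -/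
/-- Gluing step: extend the domain of a partial Lipschitz map by one more colour. -/
lemma alr_step {Z Y : Type*} [MetricSpace Y] (ι : Z → Y) (δ : Y → ℝ)
    (hδ : ∀ y y', δ y ≤ δ y' + dist y y') (C : ℝ) (hC0 : 0 ≤ C)
    (hC : ∀ (z : Z) (r : ℝ), 0 < r → ∃ (H : ℝ → Z → Z) (p : Z),
      (∀ x, dist (ι x) (ι z) ≤ r → H 1 x = x ∧ H 0 x = p) ∧
      ∀ x x', dist (ι x) (ι z) ≤ r → dist (ι x') (ι z) ≤ r → ∀ t t' : ℝ,
        0 ≤ t → t ≤ 1 → 0 ≤ t' → t' ≤ 1 →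
        dist (ι (H t x)) (ι (H t' x')) ≤ C * (dist (ι x) (ι x') + r * |t - t'|))
    (K : ℝ) (hK : 0 < K) (η : ℝ) (hη : 0 < η) (Ψ θ : Y → ℝ) (q : Y → Z) (ρ : Y → ℝ)
    (hθ : ∀ y y', 0 < δ y → 0 < δ y' → |θ y - θ y'| * δ y ≤ K * dist y y')
    (hΨ : ∀ y y', 0 < δ y → 0 < δ y' → |Ψ y - Ψ y'| * δ y ≤ K * dist y y')
    (hq : ∀ y y', 0 < δ y → 0 < δ y' → Ψ y < 1 → Ψ y' < 1 → dist y y' < η * δ y →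
      dist y y' < η * δ y' → q y = q y' ∧ ρ y = ρ y')
    (hρ : ∀ y, 0 < δ y → Ψ y < 1 →
      0 < ρ y ∧ dist y (ι (q y)) ≤ K * ρ y ∧ ρ y ≤ K * δ y ∧ δ y ≤ K * ρ y)
    (ε : ℝ) (hε : 0 < ε) (hε1 : ε ≤ 1) (f : Y → Z) (A L : ℝ) (hA0 : 0 ≤ A) (hL0 : 0 ≤ L)
    (hA : ∀ y, 0 < δ y → dist (ι (f y)) y ≤ A * δ y)
    (hL : ∀ y y', 0 < δ y → 0 < δ y' → θ y < ε → θ y' < ε →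
      dist (ι (f y)) (ι (f y')) ≤ L * dist y y') :
    ∃ (f' : Y → Z) (A' L' : ℝ), 0 ≤ A' ∧ 0 ≤ L' ∧
      (∀ y, 0 < δ y → dist (ι (f' y)) y ≤ A' * δ y) ∧
      (∀ y y', 0 < δ y → 0 < δ y' → min (θ y) (Ψ y) < ε / 2 → min (θ y') (Ψ y') < ε / 2 →
        dist (ι (f' y)) (ι (f' y')) ≤ L' * dist y y') := by
  classical
  have hC' : ∀ (z : Z) (r : ℝ), ∃ (H : ℝ → Z → Z) (p : Z), 0 < r →
      (∀ x, dist (ι x) (ι z) ≤ r → H 1 x = x ∧ H 0 x = p) ∧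
      ∀ x x', dist (ι x) (ι z) ≤ r → dist (ι x') (ι z) ≤ r → ∀ t t' : ℝ,
        0 ≤ t → t ≤ 1 → 0 ≤ t' → t' ≤ 1 →
        dist (ι (H t x)) (ι (H t' x')) ≤ C * (dist (ι x) (ι x') + r * |t - t'|) := by
    intro z r
    by_cases hr : 0 < r
    · obtain ⟨H, p, h⟩ := hC z r hr
      exact ⟨H, p, fun _ => h⟩
    · exact ⟨fun _ x => x, z, fun h => absurd h hr⟩
  choose H p hH using hC'
  set B : ℝ := A * K + K with hB
  have hB0 : 0 < B := by positivity
  set s : Y → ℝ := fun y => max 0 (min 1 ((ε - θ y) / (ε / 2))) with hs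
  have hs0 : ∀ y, 0 ≤ s y := fun y => le_max_left _ _
  have hs1 : ∀ y, s y ≤ 1 := fun y => max_le zero_le_one (min_le_left _ _)
  have hsL : ∀ y y', |s y - s y'| ≤ (2 / ε) * |θ y - θ y'| := by
    intro y y'
    have h1 : |s y - s y'| ≤ |(ε - θ y) / (ε / 2) - (ε - θ y') / (ε / 2)| := by
      have i1 := abs_max_sub_max_le_max 0 (min 1 ((ε - θ y) / (ε / 2))) 0
        (min 1 ((ε - θ y') / (ε / 2)))
      have i2 := abs_min_sub_min_le_max 1 ((ε - θ y) / (ε / 2)) 1 ((ε - θ y') / (ε / 2))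
      exact (i1.trans (max_le (by simp) le_rfl)).trans (i2.trans (max_le (by simp) le_rfl))
    refine h1.trans (le_of_eq ?_)
    have : (ε - θ y) / (ε / 2) - (ε - θ y') / (ε / 2) = (2 / ε) * (θ y' - θ y) := by
      field_simp; ring
    rw [this, abs_mul, abs_of_pos (by positivity), abs_sub_comm]
  have hsone : ∀ y, θ y ≤ ε / 2 → s y = 1 := by
    intro y hy
    have : 1 ≤ (ε - θ y) / (ε / 2) := by rw [le_div_iff₀ (by positivity)]; linarith
    simp [hs, this]
  have hszero : ∀ y, ε ≤ θ y → s y = 0 := by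
    intro y hy
    have : (ε - θ y) / (ε / 2) ≤ 0 := div_nonpos_of_nonpos_of_nonneg (by linarith) (by positivity)
    simp only [hs]
    exact max_eq_left ((min_le_right _ _).trans this)
  have hball : ∀ y, 0 < δ y → Ψ y < 1 → dist (ι (f y)) (ι (q y)) ≤ B * ρ y := by
    intro y hy h
    obtain ⟨h1, h2, h3, h4⟩ := hρ y hy h
    have h5 := dist_triangle (ι (f y)) y (ι (q y))
    have h6 := hA y hy
    have h7 : A * δ y ≤ A * (K * ρ y) := mul_le_mul_of_nonneg_left h4 hA0
    rw [hB]; linarith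
  set f' : Y → Z := fun y => if Ψ y < ε then H (q y) (B * ρ y) (s y) (f y) else f y with hf'
  set A' : ℝ := C * (B * K) + A with hA'
  have hA'0 : 0 ≤ A' := by positivity
  have hA'1 : ∀ y, 0 < δ y → dist (ι (f' y)) y ≤ A' * δ y := by
    intro y hy
    have h6 := hA y hy
    by_cases h : Ψ y < ε
    · have hlt : Ψ y < 1 := h.trans_le hε1
      obtain ⟨h1, h2, h3, h4⟩ := hρ y hy hlt
      have hb := hball y hy hlt
      obtain ⟨g1, g2⟩ := hH (q y) (B * ρ y) (by positivity)
      have g3 := g2 (f y) (f y) hb hb (s y) 1 (hs0 y) (hs1 y) zero_le_one le_rfl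
      rw [(g1 _ hb).1, dist_self, zero_add] at g3
      have g4 : |s y - 1| ≤ 1 := by
        rw [abs_le]; constructor <;> linarith [hs0 y, hs1 y]
      have g5 : C * (B * ρ y * |s y - 1|) ≤ C * (B * (K * δ y)) := by
        apply mul_le_mul_of_nonneg_left _ hC0
        calc B * ρ y * |s y - 1| ≤ B * ρ y * 1 := by gcongr
          _ ≤ B * (K * δ y) := by rw [mul_one]; gcongr
      simp only [hf', if_pos h]
      have := dist_triangle (ι (H (q y) (B * ρ y) (s y) (f y))) (ι (f y)) y
      rw [hA']; linarith
    · simp only [hf', if_neg h]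
      have : 0 ≤ C * (B * K) * δ y := by positivity
      rw [hA']; linarith
  have hsame : ∀ y, 0 < δ y → θ y ≤ ε / 2 → f' y = f y := by
    intro y hy h
    by_cases h' : Ψ y < ε
    · simp only [hf', if_pos h']
      have hlt : Ψ y < 1 := h'.trans_le hε1
      obtain ⟨h1, -⟩ := hρ y hy hlt
      rw [hsone y h]
      exact ((hH (q y) (B * ρ y) (by positivity)).1 _ (hball y hy hlt)).1
    · simp only [hf', if_neg h']
  set η' : ℝ := min η (ε / 2 / K) with hη'
  have hη'0 : 0 < η' := lt_min hη (by positivity)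
  set L1 : ℝ := C * (L + B * K * (2 / ε) * K) with hL1
  have hL10 : 0 ≤ L1 := by positivity
  -- the main estimate
  have key : ∀ y y', 0 < δ y → 0 < δ y' → dist y y' < η' * δ y → dist y y' < η' * δ y' →
      Ψ y < ε / 2 → dist (ι (f' y)) (ι (f' y')) ≤ L1 * dist y y' := by
    intro y y' hy hy' hd hd' hp
    have e1 : dist y y' < η * δ y := hd.trans_le (by gcongr; exact min_le_left _ _)
    have e1' : dist y y' < η * δ y' := hd'.trans_le (by gcongr; exact min_le_left _ _)
    have e2 : dist y y' < ε / 2 / K * δ y := hd.trans_le (by gcongr; exact min_le_right _ _)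
    have e3 : K * dist y y' < ε / 2 * δ y := by
      have := mul_lt_mul_of_pos_left e2 hK
      have e : K * (ε / 2 / K * δ y) = ε / 2 * δ y := by field_simp
      linarith
    have e4 : |Ψ y - Ψ y'| < ε / 2 := by
      have := (hΨ y y' hy hy').trans_lt e3
      exact lt_of_mul_lt_mul_right this hy.le
    have hp' : Ψ y' < ε := by have := (abs_lt.1 e4).1; linarith
    have hpe : Ψ y < ε := by linarith
    have hlt : Ψ y < 1 := by linarith
    have hlt' : Ψ y' < 1 := by linarith
    obtain ⟨q1, q2⟩ := hq y y' hy hy' hlt hlt' e1 e1'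
    have hb := hball y hy hlt
    have hb' := hball y' hy' hlt'
    obtain ⟨h1, h2, h3, h4⟩ := hρ y hy hlt
    simp only [hf', if_pos hpe, if_pos hp']
    rw [← q1, ← q2] at hb' ⊢
    obtain ⟨g1, g2⟩ := hH (q y) (B * ρ y) (by positivity)
    have r1 : B * ρ y * |s y - s y'| ≤ B * K * (2 / ε) * K * dist y y' := by
      calc B * ρ y * |s y - s y'| ≤ B * (K * δ y) * ((2 / ε) * |θ y - θ y'|) := by
            gcongr
            exact hsL y y'
        _ = B * K * (2 / ε) * (|θ y - θ y'| * δ y) := by ring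
        _ ≤ B * K * (2 / ε) * (K * dist y y') :=
            mul_le_mul_of_nonneg_left (hθ y y' hy hy') (by positivity)
        _ = _ := by ring
    have hLd : 0 ≤ L * dist y y' := by positivity
    by_cases c1 : θ y < ε
    · by_cases c2 : θ y' < ε
      · refine (g2 _ _ hb hb' _ _ (hs0 y) (hs1 y) (hs0 y') (hs1 y')).trans ?_
        rw [hL1, mul_assoc C]
        apply mul_le_mul_of_nonneg_left _ hC0
        have := hL y y' hy hy' c1 c2
        linarith
      · have z := hszero y' (not_lt.1 c2)
        have : H (q y) (B * ρ y) (s y') (f y') = H (q y) (B * ρ y) (s y') (f y) := by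
          rw [z, (g1 _ hb).2, (g1 _ hb').2]
        rw [this]
        refine (g2 _ _ hb hb _ _ (hs0 y) (hs1 y) (hs0 y') (hs1 y')).trans ?_
        rw [hL1, mul_assoc C, dist_self]
        apply mul_le_mul_of_nonneg_left _ hC0
        linarith
    · have z := hszero y (not_lt.1 c1)
      have : H (q y) (B * ρ y) (s y) (f y) = H (q y) (B * ρ y) (s y) (f y') := by
        rw [z, (g1 _ hb).2, (g1 _ hb').2]
      rw [this]
      refine (g2 _ _ hb' hb' _ _ (hs0 y) (hs1 y) (hs0 y') (hs1 y')).trans ?_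
      rw [hL1, mul_assoc C, dist_self]
      apply mul_le_mul_of_nonneg_left _ hC0
      linarith
  have far : ∀ y y', 0 < δ y → 0 < δ y' → η' * δ y ≤ dist y y' →
      dist (ι (f' y)) (ι (f' y')) ≤ (A' * (2 / η' + 1) + 1) * dist y y' := by
    intro y y' hy hy' h
    have h1 : δ y ≤ dist y y' / η' := by rw [le_div_iff₀ hη'0]; linarith
    have h2 := hδ y' y
    rw [dist_comm y' y] at h2
    have h3 := hA'1 y hy
    have h4 := hA'1 y' hy'
    have h5 := dist_triangle4 (ι (f' y)) y y' (ι (f' y'))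
    rw [dist_comm y' (ι (f' y'))] at h5
    have h6 : A' * (δ y + δ y') ≤ A' * (dist y y' / η' + dist y y' / η' + dist y y') := by
      apply mul_le_mul_of_nonneg_left _ hA'0
      linarith
    have h7 : A' * (dist y y' / η' + dist y y' / η' + dist y y') = A' * (2 / η' + 1) * dist y y' := by
      ring
    linarith
  refine ⟨f', A', L + L1 + (A' * (2 / η' + 1) + 1), hA'0, by positivity, hA'1, ?_⟩
  intro y y' hy hy' hm hm'
  have p1 : 0 ≤ L * dist y y' := by positivity
  have p2 : 0 ≤ L1 * dist y y' := by positivity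
  have p3 : 0 ≤ (A' * (2 / η' + 1) + 1) * dist y y' := by positivity
  rw [add_mul, add_mul]
  by_cases d1 : dist y y' < η' * δ y
  · by_cases d2 : dist y y' < η' * δ y'
    · by_cases t1 : θ y < ε / 2
      · by_cases t2 : θ y' < ε / 2
        · rw [hsame y hy t1.le, hsame y' hy' t2.le]
          have := hL y y' hy hy' (by linarith) (by linarith)
          linarith
        · have hp : Ψ y' < ε / 2 := by
            rcases min_lt_iff.1 hm' with h | h
            · exact absurd h t2
            · exact h
          have := key y' y hy' hy (by rwa [dist_comm]) (by rwa [dist_comm]) hp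
          rw [dist_comm (ι (f' y)), ]
          rw [dist_comm y' y] at this
          linarith
      · have hp : Ψ y < ε / 2 := by
          rcases min_lt_iff.1 hm with h | h
          · exact absurd h t1
          · exact h
        have := key y y' hy hy' d1 d2 hp
        linarith
    · have := far y' y hy' hy (by rw [dist_comm]; exact not_lt.1 d2)
      rw [dist_comm (ι (f' y)), ]
      rw [dist_comm y' y] at this
      linarith
  · have := far y y' hy hy' (not_lt.1 d1)
    linarith

/-- The abstract extension theorem from coloured partitions. -/
lemma alr_core {Z Y : Type*} [MetricSpace Y] (ι : Z → Y) (hι : Function.Injective ι) (δ : Y → ℝ)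
    (hδ : ∀ y y', δ y ≤ δ y' + dist y y')
    (hδ0 : ∀ y, 0 ≤ δ y) (hδz : ∀ y, δ y = 0 → ∃ z, ι z = y) (hδι : ∀ z, δ (ι z) = 0)
    (hδn : ∀ y, 0 < δ y → ∃ z, dist (ι z) y ≤ 2 * δ y)
    (C : ℝ) (hC0 : 0 ≤ C)
    (hC : ∀ (z : Z) (r : ℝ), 0 < r → ∃ (H : ℝ → Z → Z) (p : Z),
      (∀ x, dist (ι x) (ι z) ≤ r → H 1 x = x ∧ H 0 x = p) ∧
      ∀ x x', dist (ι x) (ι z) ≤ r → dist (ι x') (ι z) ≤ r → ∀ t t' : ℝ,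
        0 ≤ t → t ≤ 1 → 0 ≤ t' → t' ≤ 1 →
        dist (ι (H t x)) (ι (H t' x')) ≤ C * (dist (ι x) (ι x') + r * |t - t'|))
    (K : ℝ) (hK : 0 < K) (η : ℝ) (hη : 0 < η) {κ : Type*} [Fintype κ]
    (Ψ : κ → Y → ℝ) (q : κ → Y → Z) (ρ : κ → Y → ℝ)
    (hΨ : ∀ c y y', 0 < δ y → 0 < δ y' → |Ψ c y - Ψ c y'| * δ y ≤ K * dist y y')
    (hq : ∀ c y y', 0 < δ y → 0 < δ y' → Ψ c y < 1 → Ψ c y' < 1 → dist y y' < η * δ y →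
      dist y y' < η * δ y' → q c y = q c y' ∧ ρ c y = ρ c y')
    (hρ : ∀ c y, 0 < δ y → Ψ c y < 1 →
      0 < ρ c y ∧ dist y (ι (q c y)) ≤ K * ρ c y ∧ ρ c y ≤ K * δ y ∧ δ y ≤ K * ρ c y)
    (hcov : ∀ y, 0 < δ y → ∃ c, Ψ c y ≤ 0) :
    ∃ (L : ℝ) (r : Y → Z), (∀ y y', dist (ι (r y)) (ι (r y')) ≤ L * dist y y') ∧
      ∀ z, r (ι z) = z := by
  classical
  rcases isEmpty_or_nonempty Y with hY | hY
  · exact ⟨0, fun y => (hY.false y).elim, fun y => (hY.false y).elim, fun z => (hY.false (ι z)).elim⟩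
  have hZ : Nonempty Z := by
    obtain ⟨y⟩ := hY
    rcases (hδ0 y).eq_or_lt with h | h
    · exact ⟨(hδz y h.symm).choose⟩
    · exact ⟨(hδn y h).choose⟩
  have main : ∀ S : Finset κ, ∃ (θ : Y → ℝ) (ε : ℝ) (f : Y → Z) (A L : ℝ), 0 < ε ∧ ε ≤ 1 ∧
      0 ≤ A ∧ 0 ≤ L ∧
      (∀ y y', 0 < δ y → 0 < δ y' → |θ y - θ y'| * δ y ≤ K * dist y y') ∧
      (∀ c ∈ S, ∀ y, θ y ≤ Ψ c y) ∧
      (∀ y, 0 < δ y → dist (ι (f y)) y ≤ A * δ y) ∧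
      (∀ y y', 0 < δ y → 0 < δ y' → θ y < ε → θ y' < ε →
        dist (ι (f y)) (ι (f y')) ≤ L * dist y y') := by
    intro S
    induction S using Finset.induction_on with
    | empty =>
      refine ⟨fun _ => 1, 1, fun y => if h : 0 < δ y then (hδn y h).choose else Classical.arbitrary Z,
        2, 0, one_pos, le_rfl, by norm_num, le_rfl, ?_, by simp, ?_, ?_⟩
      · intro y y' _ _
        simp only [sub_self, abs_zero, zero_mul]
        positivity
      · intro y hy
        simp only [dif_pos hy]
        exact (hδn y hy).choose_spec
      · intro y y' _ _ h
        exact absurd h (lt_irrefl _)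
    | insert c S hc ih =>
      obtain ⟨θ, ε, f, A, L, hε, hε1, hA0, hL0, hθ, hθΨ, hA, hL⟩ := ih
      obtain ⟨f', A', L', hA'0, hL'0, hA', hL'⟩ := alr_step ι δ hδ C hC0 hC K hK η hη (Ψ c) θ (q c)
        (ρ c) hθ (hΨ c) (hq c) (hρ c) ε hε hε1 f A L hA0 hL0 hA hL
      refine ⟨fun y => min (θ y) (Ψ c y), ε / 2, f', A', L', by positivity, by linarith, hA'0, hL'0,
        ?_, ?_, hA', hL'⟩
      · intro y y' hy hy'
        have h := abs_min_sub_min_le_max (θ y) (Ψ c y) (θ y') (Ψ c y')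
        refine (mul_le_mul_of_nonneg_right h hy.le).trans ?_
        rcases max_choice |θ y - θ y'| |Ψ c y - Ψ c y'| with h | h <;> rw [h]
        · exact hθ y y' hy hy'
        · exact hΨ c y y' hy hy'
      · intro c' hc' y
        rcases Finset.mem_insert.1 hc' with rfl | h
        · exact min_le_right _ _
        · exact (min_le_left _ _).trans (hθΨ c' h y)
  obtain ⟨θ, ε, f, A, L, hε, hε1, hA0, hL0, hθ, hθΨ, hA, hL⟩ := main Finset.univ
  have hθε : ∀ y, 0 < δ y → θ y < ε := by
    intro y hy
    obtain ⟨c, hc⟩ := hcov y hy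
    exact ((hθΨ c (Finset.mem_univ c) y).trans hc).trans_lt hε
  refine ⟨L + A + 1, fun y => if h : ∃ z, ι z = y then h.choose else f y, ?_, ?_⟩
  · have hpos : ∀ y, (¬ ∃ z, ι z = y) → 0 < δ y := fun y h =>
      lt_of_le_of_ne (hδ0 y) (fun e => h (hδz y e.symm))
    have mixed : ∀ y z, 0 < δ y → dist (ι (f y)) (ι z) ≤ (L + A + 1) * dist y (ι z) := by
      intro y z hy
      have h1 := hδ y (ι z)
      rw [hδι z, zero_add] at h1
      have h2 := dist_triangle (ι (f y)) y (ι z)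
      have h3 := hA y hy
      have h4 : A * δ y ≤ A * dist y (ι z) := by gcongr
      have h5 : 0 ≤ L * dist y (ι z) := by positivity
      linarith
    intro y y'
    have p1 : 0 ≤ L * dist y y' := by positivity
    have p2 : 0 ≤ A * dist y y' := by positivity
    by_cases h : ∃ z, ι z = y
    · by_cases h' : ∃ z, ι z = y'
      · simp only [dif_pos h, dif_pos h']
        rw [h.choose_spec, h'.choose_spec]
        have := dist_nonneg (x := y) (y := y')
        linarith
      · simp only [dif_pos h, dif_neg h']
        have := mixed y' h.choose (hpos y' h')
        rw [h.choose_spec] at this ⊢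
        rwa [dist_comm, dist_comm y]
    · by_cases h' : ∃ z, ι z = y'
      · simp only [dif_neg h, dif_pos h']
        have := mixed y h'.choose (hpos y h)
        rwa [h'.choose_spec] at this ⊢
      · simp only [dif_neg h, dif_neg h']
        have := hL y y' (hpos y h) (hpos y' h') (hθε y (hpos y h)) (hθε y' (hpos y' h'))
        have := dist_nonneg (x := y) (y := y')
        linarith
  · intro z
    have h : ∃ z', ι z' = ι z := ⟨z, rfl⟩
    simp only [dif_pos h]
    exact hι h.choose_spec

/-- The coloured Whitney-type cover. -/
lemma alr_cover {Z Y : Type*} [MetricSpace Y] (ι : Z → Y) (δ : Y → ℝ)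
    (hδ : ∀ y y', δ y ≤ δ y' + dist y y')
    (hδn : ∀ y, 0 < δ y → ∃ z, dist (ι z) y ≤ 2 * δ y)
    (z₀ : Z) {I : Type*} (N : ℕ) (col : I → Fin N)
    (hnet : ∀ r : ℝ, 0 < r → ∃ p : I → Z, (∀ z, ∃ i, dist (ι z) (ι (p i)) ≤ r) ∧
      ∀ i j, col i = col j → dist (ι (p i)) (ι (p j)) < 12 * r → i = j) :
    ∃ (Ψ : ZMod 3 × Fin N → Y → ℝ) (q : ZMod 3 × Fin N → Y → Z) (ρ : ZMod 3 × Fin N → Y → ℝ),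
    (∀ c y y', 0 < δ y → 0 < δ y' → |Ψ c y - Ψ c y'| * δ y ≤ 11 * dist y y') ∧
    (∀ c y y', 0 < δ y → 0 < δ y' → Ψ c y < 1 → Ψ c y' < 1 → dist y y' < (1 / 10) * δ y →
      dist y y' < (1 / 10) * δ y' → q c y = q c y' ∧ ρ c y = ρ c y') ∧
    (∀ c y, 0 < δ y → Ψ c y < 1 →
      0 < ρ c y ∧ dist y (ι (q c y)) ≤ 11 * ρ c y ∧ ρ c y ≤ 11 * δ y ∧ δ y ≤ 11 * ρ c y) ∧
    (∀ y, 0 < δ y → ∃ c, Ψ c y ≤ 0) := by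
  classical
  have hr : ∀ k : ℤ, (0 : ℝ) < 2 ^ k := fun k => by positivity
  choose p hp1 hp2 using fun k : ℤ => hnet (2 ^ k) (hr k)
  obtain ⟨i₀, -⟩ := hp1 0 z₀
  set ψ : ℤ × I → Y → ℝ := fun j y => max 0 (2 * max (dist y (ι (p j.1 j.2)) / 2 ^ j.1 - 5)
    (max (1 - δ y / 2 ^ j.1) (δ y / 2 ^ j.1 - 2))) with hψ
  have hψ0 : ∀ j y, 0 ≤ ψ j y := fun j y => le_max_left _ _
  have hψlt : ∀ j y, ψ j y < 1 → dist y (ι (p j.1 j.2)) < 11 / 2 * 2 ^ j.1 ∧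
      1 / 2 * 2 ^ j.1 < δ y ∧ δ y < 5 / 2 * 2 ^ j.1 := by
    intro j y h
    have hk := hr j.1
    have h1 := (max_lt_iff.1 h).2
    have h2 : max (dist y (ι (p j.1 j.2)) / 2 ^ j.1 - 5)
      (max (1 - δ y / 2 ^ j.1) (δ y / 2 ^ j.1 - 2)) < 1 / 2 := by linarith
    obtain ⟨a, b⟩ := max_lt_iff.1 h2
    obtain ⟨b, c⟩ := max_lt_iff.1 b
    refine ⟨?_, ?_, ?_⟩
    · rw [← div_lt_iff₀ hk]; linarith
    · rw [← lt_div_iff₀ hk]; linarith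
    · rw [← div_lt_iff₀ hk]; linarith
  have hψL : ∀ j y y', ψ j y ≤ ψ j y' + 2 * (dist y y' / 2 ^ j.1) := by
    intro j y y'
    have hk := hr j.1
    have hnn : 0 ≤ dist y y' / 2 ^ j.1 := by positivity
    have a1 : dist y (ι (p j.1 j.2)) / 2 ^ j.1 ≤ dist y' (ι (p j.1 j.2)) / 2 ^ j.1 + dist y y' / 2 ^ j.1 := by
      rw [← add_div]; gcongr; linarith [dist_triangle y y' (ι (p j.1 j.2))]
    have a2 : δ y / 2 ^ j.1 ≤ δ y' / 2 ^ j.1 + dist y y' / 2 ^ j.1 := by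
      rw [← add_div]; gcongr; exact hδ y y'
    have a3 : δ y' / 2 ^ j.1 ≤ δ y / 2 ^ j.1 + dist y y' / 2 ^ j.1 := by
      rw [← add_div]; gcongr; rw [dist_comm]; exact hδ y' y
    have b0 := hψ0 j y'
    have b1 : 2 * max (dist y' (ι (p j.1 j.2)) / 2 ^ j.1 - 5)
      (max (1 - δ y' / 2 ^ j.1) (δ y' / 2 ^ j.1 - 2)) ≤ ψ j y' := le_max_right _ _
    have b2 := le_max_left (dist y' (ι (p j.1 j.2)) / 2 ^ j.1 - 5)
      (max (1 - δ y' / 2 ^ j.1) (δ y' / 2 ^ j.1 - 2))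
    have b3 := le_max_right (dist y' (ι (p j.1 j.2)) / 2 ^ j.1 - 5)
      (max (1 - δ y' / 2 ^ j.1) (δ y' / 2 ^ j.1 - 2))
    have b4 := le_max_left (1 - δ y' / 2 ^ j.1) (δ y' / 2 ^ j.1 - 2)
    have b5 := le_max_right (1 - δ y' / 2 ^ j.1) (δ y' / 2 ^ j.1 - 2)
    refine max_le (by linarith) ?_
    rw [← le_div_iff₀' two_pos]
    refine max_le (by linarith) (max_le (by linarith) (by linarith))
  -- uniqueness
  let cl : ℤ × I → ZMod 3 × Fin N := fun j => ((j.1 : ZMod 3), col j.2)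
  have huniq : ∀ j j' y y', cl j = cl j' → ψ j y < 1 → ψ j' y' < 1 → dist y y' < (1 / 10) * δ y →
      dist y y' < (1 / 10) * δ y' → j = j' := by
    rintro ⟨k, i⟩ ⟨k', i'⟩ y y' hc h h' d d'
    obtain ⟨a1, a2, a3⟩ := hψlt _ _ h
    obtain ⟨b1, b2, b3⟩ := hψlt _ _ h'
    simp only [cl, Prod.mk.injEq] at hc a1 a2 a3 b1 b2 b3
    obtain ⟨hc1, hc2⟩ := hc
    have e1 := hδ y y'
    have e2 := hδ y' y
    rw [dist_comm] at e2
    have hk := hr k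
    have hk' := hr k'
    have k1 : k < k' + 3 := by
      rw [← zpow_lt_zpow_iff_right₀ (one_lt_two (α := ℝ)), zpow_add₀ two_ne_zero]
      norm_num
      linarith
    have k2 : k' < k + 3 := by
      rw [← zpow_lt_zpow_iff_right₀ (one_lt_two (α := ℝ)), zpow_add₀ two_ne_zero]
      norm_num
      linarith
    have hkk : k = k' := by
      rw [ZMod.intCast_eq_intCast_iff_dvd_sub] at hc1
      push_cast at hc1
      omega
    subst hkk
    have := hp2 k i i' hc2 (by
      have t := dist_triangle4 (ι (p k i)) y y' (ι (p k i'))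
      rw [dist_comm (ι (p k i)) y] at t
      linarith)
    rw [this]
  set Q : ZMod 3 × Fin N → Y → ℤ × I := fun c y =>
    if h : ∃ j, cl j = c ∧ ψ j y < 1 then h.choose else (0, i₀) with hQ
  set Ψ : ZMod 3 × Fin N → Y → ℝ := fun c y =>
    if h : ∃ j, cl j = c ∧ ψ j y < 1 then ψ h.choose y else 1 with hΨ
  have hQs : ∀ c y, Ψ c y < 1 → cl (Q c y) = c ∧ ψ (Q c y) y < 1 ∧ Ψ c y = ψ (Q c y) y := by
    intro c y h
    by_cases hj : ∃ j, cl j = c ∧ ψ j y < 1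
    · simp only [hQ, hΨ, dif_pos hj]
      exact ⟨hj.choose_spec.1, hj.choose_spec.2, trivial⟩
    · simp only [hΨ, dif_neg hj] at h
      exact absurd h (lt_irrefl _)
  have hΨ1 : ∀ c y, Ψ c y ≤ 1 := by
    intro c y
    by_cases hj : ∃ j, cl j = c ∧ ψ j y < 1
    · simp only [hΨ, dif_pos hj]
      exact hj.choose_spec.2.le
    · simp only [hΨ, dif_neg hj]; exact le_rfl
  have hΨ0 : ∀ c y, 0 ≤ Ψ c y := by
    intro c y
    by_cases hj : ∃ j, cl j = c ∧ ψ j y < 1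
    · simp only [hΨ, dif_pos hj]
      exact hψ0 _ _
    · simp only [hΨ, dif_neg hj]; exact zero_le_one
  have hΨle : ∀ j y, 0 < δ y → ψ j y < 1 → Ψ (cl j) y = ψ j y := by
    intro j y hy h
    have hj : ∃ j', cl j' = cl j ∧ ψ j' y < 1 := ⟨j, rfl, h⟩
    have : hj.choose = j := huniq _ _ y y hj.choose_spec.1 hj.choose_spec.2 h
      (by rw [dist_self]; positivity) (by rw [dist_self]; positivity)
    simp only [hΨ, dif_pos hj]
    rw [this]
  have half : ∀ c y y', 0 < δ y → 0 < δ y' → (Ψ c y' - Ψ c y) * δ y ≤ 11 * dist y y' ∧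
      (Ψ c y' - Ψ c y) * δ y' ≤ 11 * dist y y' := by
    intro c y y' hy hy'
    have u1 := hΨ1 c y'
    have u0 := hΨ0 c y
    have dn := dist_nonneg (x := y) (y := y')
    have e1 := hδ y y'
    have e2 := hδ y' y
    rw [dist_comm] at e2
    have triv : Ψ c y' - Ψ c y ≤ 1 := by linarith
    have t1 : (Ψ c y' - Ψ c y) * δ y ≤ 1 * δ y := mul_le_mul_of_nonneg_right triv hy.le
    have t2 : (Ψ c y' - Ψ c y) * δ y' ≤ 1 * δ y' := mul_le_mul_of_nonneg_right triv hy'.le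
    by_cases d1 : dist y y' < (1 / 10) * δ y
    swap
    · constructor <;> linarith
    by_cases d2 : dist y y' < (1 / 10) * δ y'
    swap
    · constructor <;> linarith
    by_cases hlt : Ψ c y < 1
    swap
    · have : Ψ c y' - Ψ c y ≤ 0 := by linarith
      constructor
      · have := mul_nonpos_of_nonpos_of_nonneg this hy.le
        linarith
      · have := mul_nonpos_of_nonpos_of_nonneg this hy'.le
        linarith
    obtain ⟨q1, q2, q3⟩ := hQs c y hlt
    set j := Q c y with hj
    have hle : Ψ c y' ≤ ψ j y' := by
      by_cases h : ψ j y' < 1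
      · rw [← q1]; exact (hΨle j y' hy' h).le
      · linarith
    have hL := hψL j y' y
    rw [dist_comm y' y] at hL
    obtain ⟨a1, a2, a3⟩ := hψlt _ _ q2
    have hk := hr j.1
    have hdiff : Ψ c y' - Ψ c y ≤ 2 * (dist y y' / 2 ^ j.1) := by linarith
    have hnn : 0 ≤ dist y y' / 2 ^ j.1 := by positivity
    have hm : dist y y' / 2 ^ j.1 * 2 ^ j.1 = dist y y' := by field_simp
    constructor
    · calc (Ψ c y' - Ψ c y) * δ y ≤ 2 * (dist y y' / 2 ^ j.1) * δ y := by gcongr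
        _ ≤ 2 * (dist y y' / 2 ^ j.1) * (5 / 2 * 2 ^ j.1) := by gcongr
        _ = 5 * (dist y y' / 2 ^ j.1 * 2 ^ j.1) := by ring
        _ ≤ _ := by rw [hm]; linarith
    · calc (Ψ c y' - Ψ c y) * δ y' ≤ 2 * (dist y y' / 2 ^ j.1) * δ y' := by gcongr
        _ ≤ 2 * (dist y y' / 2 ^ j.1) * (11 / 4 * 2 ^ j.1) := by gcongr; linarith
        _ = 11 / 2 * (dist y y' / 2 ^ j.1 * 2 ^ j.1) := by ring
        _ ≤ _ := by rw [hm]; linarith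
  refine ⟨Ψ, fun c y => p (Q c y).1 (Q c y).2, fun c y => 2 ^ (Q c y).1, ?_, ?_, ?_, ?_⟩
  · intro c y y' hy hy'
    have h1 := (half c y y' hy hy').1
    have h2 := (half c y' y hy' hy).2
    rw [dist_comm y' y] at h2
    rcases abs_choice (Ψ c y - Ψ c y') with h | h <;> rw [h]
    · exact h2
    · rwa [neg_sub]
  · intro c y y' hy hy' h h' d d'
    obtain ⟨q1, q2, -⟩ := hQs c y h
    obtain ⟨q1', q2', -⟩ := hQs c y' h'
    have := huniq _ _ y y' (q1.trans q1'.symm) q2 q2' d d'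
    simp only [this, and_self]
  · intro c y hy h
    obtain ⟨q1, q2, -⟩ := hQs c y h
    obtain ⟨a1, a2, a3⟩ := hψlt _ _ q2
    have hk := hr (Q c y).1
    refine ⟨hk, ?_, ?_, ?_⟩ <;> linarith
  · intro y hy
    obtain ⟨k, hk1, hk2⟩ := exists_mem_Ico_zpow (y := (2 : ℝ)) hy one_lt_two
    obtain ⟨z, hz⟩ := hδn y hy
    obtain ⟨i, hi⟩ := hp1 k z
    have hk := hr k
    rw [zpow_add₀ two_ne_zero, zpow_one] at hk2
    have hψz : ψ (k, i) y ≤ 0 := by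
      refine max_le le_rfl ?_
      have : max (dist y (ι (p k i)) / 2 ^ k - 5) (max (1 - δ y / 2 ^ k) (δ y / 2 ^ k - 2)) ≤ 0 := by
        refine max_le ?_ (max_le ?_ ?_)
        · rw [sub_nonpos, div_le_iff₀ hk]
          have := dist_triangle y (ι z) (ι (p k i))
          rw [dist_comm y (ι z)] at this
          linarith
        · rw [sub_nonpos, le_div_iff₀ hk]; linarith
        · rw [sub_nonpos, div_le_iff₀ hk]; linarith
      simp only
      linarith
    exact ⟨cl (k, i), by rw [hΨle _ _ hy (by linarith)]; exact hψz⟩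

/-- Nonempty subsets with at most `n` elements. -/
abbrev AlrFS (E : Type*) (n : ℕ) := {S : Set E // S.Nonempty ∧ S.Finite ∧ S.ncard ≤ n}

lemma alr_exists_near {E : Type*} [MetricSpace E] {n : ℕ} (S T : AlrFS E n) {x : E} (hx : x ∈ S.1) :
    ∃ y ∈ T.1, dist x y ≤ Metric.hausdorffDist S.1 T.1 := by
  obtain ⟨y, hy, h⟩ := T.2.2.1.isCompact.exists_infDist_eq_dist T.2.1 x
  refine ⟨y, hy, ?_⟩
  rw [← h]
  exact Metric.infDist_le_hausdorffDist_of_mem hx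
    (Metric.hausdorffEDist_ne_top_of_nonempty_of_bounded S.2.1 T.2.1 S.2.2.1.isBounded T.2.2.1.isBounded)

lemma alr_exists_near' {E : Type*} [MetricSpace E] {n : ℕ} (S T : AlrFS E n) {x : E} (hx : x ∈ T.1) :
    ∃ y ∈ S.1, dist x y ≤ Metric.hausdorffDist S.1 T.1 := by
  rw [Metric.hausdorffDist_comm]; exact alr_exists_near T S hx

lemma alr_cluster {E : Type*} [MetricSpace E] (r : ℝ) (hr : 0 ≤ r) (S : Finset E) :
    ∃ q : E → E, (∀ s ∈ S, dist s (q s) ≤ r * (2 ^ S.card - 1)) ∧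
      ∀ s ∈ S, ∀ s' ∈ S, dist s s' ≤ r → q s = q s' := by
  classical
  induction S using Finset.induction_on with
  | empty => exact ⟨id, by simp, by simp⟩
  | insert a S ha ih =>
    obtain ⟨q, h1, h2⟩ := ih
    have hp : (0 : ℝ) ≤ 2 ^ S.card - 1 := by
      have : (1 : ℝ) ≤ 2 ^ S.card := one_le_pow₀ one_le_two
      linarith
    rw [Finset.card_insert_of_notMem ha, pow_succ]
    have hpr := mul_nonneg hr hp
    let P : E → Prop := fun s => s = a ∨ ∃ t ∈ S, dist a t ≤ r ∧ q s = q t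
    refine ⟨fun s => if P s then a else q s, ?_, ?_⟩
    · intro s hs
      by_cases hP : P s
      · simp only [if_pos hP]
        by_cases hsa : s = a
        · rw [hsa, dist_self]; nlinarith
        have hs' := (Finset.mem_insert.1 hs).resolve_left hsa
        rcases hP with h | ⟨t, ht, hat, hq⟩
        · exact absurd h hsa
        · have e1 := h1 s hs'
          have e2 := h1 t ht
          have e3 := dist_triangle4 s (q s) t a
          rw [hq, dist_comm (q t) t, dist_comm t a] at e3
          rw [hq] at e1
          nlinarith
      · simp only [if_neg hP]
        have hsa : s ≠ a := fun h => hP (Or.inl h)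
        have e1 := h1 s ((Finset.mem_insert.1 hs).resolve_left hsa)
        nlinarith
    · have key : ∀ s ∈ insert a S, ∀ s' ∈ insert a S, dist s s' ≤ r → P s → P s' := by
        intro s hs s' hs' hd hP
        by_cases h' : s' = a
        · exact Or.inl h'
        have hs'S := (Finset.mem_insert.1 hs').resolve_left h'
        by_cases h : s = a
        · exact Or.inr ⟨s', hs'S, by rwa [← h], rfl⟩
        have hsS := (Finset.mem_insert.1 hs).resolve_left h
        rcases hP with hP | ⟨t, ht, hat, hq⟩
        · exact absurd hP h
        · exact Or.inr ⟨t, ht, hat, by rw [← hq]; exact (h2 s hsS s' hs'S hd).symm⟩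
      intro s hs s' hs' hd
      by_cases hP : P s
      · have hP' := key s hs s' hs' hd hP
        simp only [if_pos hP, if_pos hP']
      · have hP' : ¬ P s' := fun h => hP (key s' hs' s hs (by rwa [dist_comm]) h)
        simp only [if_neg hP, if_neg hP']
        exact h2 s ((Finset.mem_insert.1 hs).resolve_left fun h => hP (Or.inl h)) s'
          ((Finset.mem_insert.1 hs').resolve_left fun h => hP' (Or.inl h)) hd

lemma alr_contract {E : Type*} [NormedAddCommGroup E] [NormedSpace ℝ E] (n : ℕ) :
    ∃ C : ℝ, 0 ≤ C ∧ ∀ (z : AlrFS E n) (r : ℝ), 0 < r →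
      ∃ (H : ℝ → AlrFS E n → AlrFS E n) (p : AlrFS E n),
      (∀ x, Metric.hausdorffDist x.1 z.1 ≤ r → H 1 x = x ∧ H 0 x = p) ∧
      ∀ x x', Metric.hausdorffDist x.1 z.1 ≤ r → Metric.hausdorffDist x'.1 z.1 ≤ r → ∀ t t' : ℝ,
        0 ≤ t → t ≤ 1 → 0 ≤ t' → t' ≤ 1 →
        Metric.hausdorffDist (H t x).1 (H t' x').1 ≤
          C * (Metric.hausdorffDist x.1 x'.1 + r * |t - t'|) := by
  classical
  set M : ℝ := 3 * 2 ^ n + 1 with hM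
  have hM0 : 0 < M := by positivity
  refine ⟨2 * M + 1, by positivity, ?_⟩
  intro z r hr
  obtain ⟨g, hg1, hg2⟩ := alr_cluster (3 * r) (by positivity) z.2.2.1.toFinset
  simp only [Set.Finite.mem_toFinset] at hg1 hg2
  have hcard : z.2.2.1.toFinset.card ≤ n := by
    rw [← Set.ncard_eq_toFinset_card z.1 z.2.2.1]; exact z.2.2.2
  have hg1' : ∀ s ∈ z.1, dist s (g s) ≤ 3 * r * 2 ^ n := by
    intro s hs
    refine (hg1 s hs).trans ?_
    have : (2 : ℝ) ^ z.2.2.1.toFinset.card ≤ 2 ^ n := pow_le_pow_right₀ one_le_two hcard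
    have h3 : (2 : ℝ) ^ z.2.2.1.toFinset.card - 1 ≤ 2 ^ n := by linarith
    gcongr
  let q : E → E := fun x => if h : ∃ s ∈ z.1, dist x s ≤ r then g h.choose else x
  have hq : ∀ x, ∀ s ∈ z.1, dist x s ≤ r → q x = g s := by
    intro x s hs hd
    have h : ∃ s ∈ z.1, dist x s ≤ r := ⟨s, hs, hd⟩
    simp only [q, dif_pos h]
    refine hg2 _ h.choose_spec.1 _ hs ?_
    have := dist_triangle_left h.choose s x
    have := h.choose_spec.2
    linarith
  have hqd : ∀ x, ∀ s ∈ z.1, dist x s ≤ r → dist x (q x) ≤ M * r := by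
    intro x s hs hd
    rw [hq x s hs hd]
    have := dist_triangle x s (g s)
    have := hg1' s hs
    rw [hM]; linarith
  have hqe : ∀ x, ∀ s ∈ z.1, dist x s ≤ r → ∀ x', ∀ s' ∈ z.1, dist x' s' ≤ r → dist x x' < r →
      q x = q x' := by
    intro x s hs hd x' s' hs' hd' hxx
    rw [hq x s hs hd, hq x' s' hs' hd']
    refine hg2 _ hs _ hs' ?_
    have := dist_triangle4 s x x' s'
    rw [dist_comm s x] at this
    linarith
  let h : ℝ → E → E := fun t x => q x + t • (x - q x)
  have hh : ∀ t x, 0 ≤ t → t ≤ 1 → dist (h t x) x ≤ dist x (q x) := by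
    intro t x h0 h1
    have : h t x - x = (t - 1) • (x - q x) := by
      simp only [h]; module
    rw [dist_eq_norm, this, norm_smul, dist_eq_norm]
    have : ‖t - 1‖ ≤ 1 := by rw [Real.norm_eq_abs, abs_le]; constructor <;> linarith
    exact mul_le_of_le_one_left (norm_nonneg _) this
  let H : ℝ → AlrFS E n → AlrFS E n := fun t S =>
    ⟨h t '' S.1, S.2.1.image _, S.2.2.1.image _, (Set.ncard_image_le S.2.2.1).trans S.2.2.2⟩
  refine ⟨H, ⟨g '' z.1, z.2.1.image _, z.2.2.1.image _, (Set.ncard_image_le z.2.2.1).trans z.2.2.2⟩,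
    ?_, ?_⟩
  · intro x hx
    constructor
    · apply Subtype.ext
      have : h 1 = id := by ext y; simp [h]
      simp only [H, this, Set.image_id]
    · apply Subtype.ext
      simp only [H]
      have h0 : h 0 = q := by ext y; simp [h]
      rw [h0]
      ext y
      constructor
      · rintro ⟨a, ha, rfl⟩
        obtain ⟨s, hs, hd⟩ := alr_exists_near x z ha
        exact ⟨s, hs, (hq a s hs (hd.trans hx)).symm⟩
      · rintro ⟨s, hs, rfl⟩
        obtain ⟨a, ha, hd⟩ := alr_exists_near' x z hs
        exact ⟨a, ha, hq a s hs (by rw [dist_comm]; exact hd.trans hx)⟩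
  · intro x x' hx hx' t t' ht0 ht1 ht0' ht1'
    set D := Metric.hausdorffDist x.1 x'.1 with hD
    have hD0 : 0 ≤ D := Metric.hausdorffDist_nonneg
    have main : ∀ a b s s', s ∈ z.1 → s' ∈ z.1 → dist a s ≤ r → dist b s' ≤ r → dist a b ≤ D →
        dist (h t a) (h t' b) ≤ (2 * M + 1) * (D + r * |t - t'|) := by
      intro a b s s' hs hs' has hbs hab
      have ea := hqd a s hs has
      have eb := hqd b s' hs' hbs
      have hn : 0 ≤ r * |t - t'| := by positivity
      by_cases hlt : D < r
      · have e := hqe a s hs has b s' hs' hbs (hab.trans_lt hlt)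
        have : h t a - h t' b = t' • (a - b) + (t - t') • (a - q a) := by
          simp only [h, ← e]; module
        rw [dist_eq_norm, this]
        refine (norm_add_le _ _).trans ?_
        rw [norm_smul, norm_smul, ← dist_eq_norm a b, ← dist_eq_norm a (q a), Real.norm_eq_abs, Real.norm_eq_abs,
          abs_of_nonneg ht0']
        have i1 : t' * dist a b ≤ 1 * D := by gcongr
        have i2 : |t - t'| * dist a (q a) ≤ |t - t'| * (M * r) := by gcongr
        nlinarith [mul_nonneg hM0.le hn, mul_nonneg hM0.le hD0]
      · have e1 := hh t a ht0 ht1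
        have e2 := hh t' b ht0' ht1'
        have e3 := dist_triangle4 (h t a) a b (h t' b)
        rw [dist_comm b] at e3
        have e4 : M * r ≤ M * D := by gcongr; exact not_lt.1 hlt
        nlinarith [mul_nonneg hM0.le hn, mul_nonneg hM0.le hD0]
    refine Metric.hausdorffDist_le_of_mem_dist (by positivity) ?_ ?_
    · rintro _ ⟨a, ha, rfl⟩
      obtain ⟨b, hb, hab⟩ := alr_exists_near x x' ha
      obtain ⟨s, hs, hd⟩ := alr_exists_near x z ha
      obtain ⟨s', hs', hd'⟩ := alr_exists_near x' z hb
      exact ⟨h t' b, ⟨b, hb, rfl⟩, main a b s s' hs hs' (hd.trans hx) (hd'.trans hx') hab⟩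
    · rintro _ ⟨b, hb, rfl⟩
      obtain ⟨a, ha, hab⟩ := alr_exists_near' x x' hb
      obtain ⟨s, hs, hd⟩ := alr_exists_near x z ha
      obtain ⟨s', hs', hd'⟩ := alr_exists_near x' z hb
      refine ⟨h t a, ⟨a, ha, rfl⟩, ?_⟩
      rw [dist_comm]
      exact main a b s s' hs hs' (hd.trans hx) (hd'.trans hx') (by rwa [dist_comm])

/-- Greedy colouring. -/
lemma alr_color {I : Type*} (adj : I → I → Prop) (N : ℕ)
    (hN : ∀ i, ∃ F : Finset I, F.card ≤ N ∧ ∀ j, adj i j → j ∈ F)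
    (hsymm : ∀ i j, adj i j → adj j i) :
    ∃ col : I → Fin (N + 1), ∀ i j, adj i j → col i = col j → i = j := by
  classical
  choose F hF1 hF2 using hN
  have hex : ∀ (i : I) (c : ∀ j, WellOrderingRel j i → Fin (N + 1)),
      ∃ a : Fin (N + 1), ∀ j (hj : WellOrderingRel j i), adj i j → c j hj ≠ a := by
    intro i c
    by_contra hcon
    push Not at hcon
    choose g hg1 hg2 hg3 using hcon
    have hinj : Function.Injective g := by
      intro a b hab
      rw [← hg3 a, ← hg3 b]
      congr 1
    have : (Finset.univ.image g).card ≤ (F i).card := Finset.card_le_card (by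
      intro x hx
      obtain ⟨a, -, rfl⟩ := Finset.mem_image.1 hx
      exact hF2 i _ (hg2 a))
    rw [Finset.card_image_of_injective _ hinj, Finset.card_univ, Fintype.card_fin] at this
    have := hF1 i
    omega
  choose G hG using hex
  let wf : WellFounded (WellOrderingRel (α := I)) := IsWellFounded.wf
  let col : I → Fin (N + 1) := wf.fix G
  have hcol : ∀ i j, WellOrderingRel j i → adj i j → col j ≠ col i := by
    intro i j hji hadj
    have : col i = G i (fun j _ => col j) := wf.fix_eq G i
    rw [this]
    exact hG i (fun j _ => col j) j hji hadj
  refine ⟨col, fun i j hadj hc => ?_⟩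
  rcases trichotomous_of (WellOrderingRel (α := I)) i j with h | h | h
  · exact absurd hc (hcol j i h (hsymm i j hadj))
  · exact h
  · exact absurd hc.symm (hcol i j h hadj)

lemma alr_net (d n : ℕ) (hd : 1 ≤ d) :
    ∃ (N : ℕ) (col : {T : Finset (Fin d → ℤ) // T.Nonempty ∧ T.card ≤ n} → Fin N), ∀ r : ℝ, 0 < r →
      ∃ p : {T : Finset (Fin d → ℤ) // T.Nonempty ∧ T.card ≤ n} → AlrFS (EuclideanSpace ℝ (Fin d)) n,
      (∀ z : AlrFS (EuclideanSpace ℝ (Fin d)) n, ∃ i, Metric.hausdorffDist z.1 (p i).1 ≤ r) ∧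
      ∀ i j, col i = col j → Metric.hausdorffDist (p i).1 (p j).1 < 12 * r → i = j := by
  classical
  set M : ℤ := 12 * d with hM
  let I := {T : Finset (Fin d → ℤ) // T.Nonempty ∧ T.card ≤ n}
  let near : (Fin d → ℤ) → (Fin d → ℤ) → Prop := fun x y => ∀ i, |x i - y i| ≤ M
  have nsymm : ∀ x y, near x y → near y x := fun x y h i => by rw [abs_sub_comm]; exact h i
  let adj : I → I → Prop := fun T T' => (∀ x ∈ T.1, ∃ y ∈ T'.1, near x y) ∧
    (∀ x ∈ T'.1, ∃ y ∈ T.1, near x y)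
  obtain ⟨m, hm⟩ : ∃ m : ℕ, ∀ t : Fin d → ℤ,
      (Finset.Icc (t - fun _ => M) (t + fun _ => M)).card ≤ m := by
    refine ⟨∏ i : Fin d, (2 * M + 1).toNat, fun t => ?_⟩
    rw [Pi.card_Icc]
    apply le_of_eq
    refine Finset.prod_congr rfl fun i _ => ?_
    rw [Int.card_Icc]
    congr 1
    simp only [Pi.add_apply, Pi.sub_apply]
    ring
  have hN : ∀ T : I, ∃ F : Finset I, F.card ≤ 2 ^ (n * m) ∧ ∀ T', adj T T' → T' ∈ F := by
    intro T
    let U := T.1.biUnion fun t => Finset.Icc (t - fun _ => M) (t + fun _ => M)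
    have hU : U.card ≤ n * m :=
      (Finset.card_biUnion_le_card_mul _ _ m fun t _ => hm t).trans (Nat.mul_le_mul_right m T.2.2)
    let G : Finset I := U.powerset.subtype (fun T => T.Nonempty ∧ T.card ≤ n)
    refine ⟨G, ?_, ?_⟩
    · calc G.card ≤ U.powerset.card := by
            rw [Finset.card_subtype]; exact Finset.card_filter_le _ _
        _ = 2 ^ U.card := Finset.card_powerset _
        _ ≤ _ := Nat.pow_le_pow_right (by norm_num) hU
    · intro T' h
      rw [Finset.mem_subtype, Finset.mem_powerset]
      intro x hx
      obtain ⟨y, hy, hxy⟩ := h.2 x hx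
      refine Finset.mem_biUnion.2 ⟨y, hy, Finset.mem_Icc.2 ⟨fun i => ?_, fun i => ?_⟩⟩
      · have := abs_le.1 (hxy i)
        simp only [Pi.sub_apply]; linarith [this.1]
      · have := abs_le.1 (hxy i)
        simp only [Pi.add_apply]; linarith [this.2]
  obtain ⟨col, hcol⟩ := alr_color adj _ hN (fun T T' h => ⟨h.2, h.1⟩)
  refine ⟨_, col, fun r hr => ?_⟩
  have hd0 : (0 : ℝ) < d := by exact_mod_cast hd
  have hd1 : (1 : ℝ) ≤ d := by exact_mod_cast hd
  set r' : ℝ := r / d with hr'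
  have hr'0 : 0 < r' := by positivity
  have hdr : d * r' = r := by rw [hr']; field_simp
  let pt : (Fin d → ℤ) → EuclideanSpace ℝ (Fin d) := fun x => WithLp.toLp 2 fun i => r' * x i
  have hpt : ∀ x y, dist (pt x) (pt y) < 12 * r → near x y := by
    intro x y h i
    have h1 : |(pt x) i - (pt y) i| ≤ dist (pt x) (pt y) := by
      rw [dist_eq_norm]
      exact PiLp.norm_apply_le (pt x - pt y) i
    have h2 : (pt x) i - (pt y) i = r' * ((x i - y i : ℤ) : ℝ) := by
      simp only [pt]; push_cast; ring
    rw [h2, abs_mul, abs_of_pos hr'0] at h1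
    have h3 : r' * |((x i - y i : ℤ) : ℝ)| < r' * (12 * d) := by
      calc _ < 12 * r := h1.trans_lt h
        _ = _ := by rw [← hdr]; ring
    have h4 := lt_of_mul_lt_mul_left h3 hr'0.le
    have h5 : |x i - y i| < M := by
      rw [hM]; exact_mod_cast h4
    exact h5.le
  let fl : EuclideanSpace ℝ (Fin d) → (Fin d → ℤ) := fun x i => ⌊x i / r'⌋
  have hfl : ∀ x, dist x (pt (fl x)) ≤ r := by
    intro x
    rw [EuclideanSpace.dist_eq]
    apply Real.sqrt_le_iff.2 ⟨hr.le, ?_⟩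
    have : ∀ i, dist (x i) (pt (fl x) i) ^ 2 ≤ r' ^ 2 := by
      intro i
      have e : x i - pt (fl x) i = r' * Int.fract (x i / r') := by
        simp only [pt, fl, Int.fract]; field_simp
      rw [Real.dist_eq, e, abs_of_nonneg (mul_nonneg hr'0.le (Int.fract_nonneg _))]
      have := (Int.fract_lt_one (x i / r')).le
      have := mul_le_mul_of_nonneg_left this hr'0.le
      have := mul_nonneg hr'0.le (Int.fract_nonneg (x i / r'))
      gcongr
      linarith
    calc _ ≤ ∑ i : Fin d, r' ^ 2 := Finset.sum_le_sum fun i _ => this i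
      _ = d * r' ^ 2 := by simp
      _ ≤ r ^ 2 := by rw [← hdr]; nlinarith [sq_nonneg r', mul_nonneg (sub_nonneg.2 hd1) (mul_nonneg hd0.le (sq_nonneg r'))]
  refine ⟨fun T => ⟨pt '' (T.1 : Set (Fin d → ℤ)), (Finset.coe_nonempty.2 T.2.1).image _, T.1.finite_toSet.image _,
    (Set.ncard_image_le T.1.finite_toSet).trans (by rw [Set.ncard_coe_finset]; exact T.2.2)⟩, ?_, ?_⟩
  · intro z
    refine ⟨⟨z.2.2.1.toFinset.image fl, ?_, ?_⟩, ?_⟩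
    · simpa using z.2.1
    · refine Finset.card_image_le.trans ?_
      rw [← Set.ncard_eq_toFinset_card z.1 z.2.2.1]; exact z.2.2.2
    · simp only [Finset.coe_image, Set.Finite.coe_toFinset]
      refine Metric.hausdorffDist_le_of_mem_dist hr.le ?_ ?_
      · intro x hx
        exact ⟨_, ⟨_, ⟨x, hx, rfl⟩, rfl⟩, hfl x⟩
      · rintro _ ⟨_, ⟨x, hx, rfl⟩, rfl⟩
        exact ⟨x, hx, by rw [dist_comm]; exact hfl x⟩
  · intro T T' hc h
    refine hcol T T' ⟨?_, ?_⟩ hc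
    · intro x hx
      obtain ⟨_, ⟨y, hy, rfl⟩, hd⟩ := alr_exists_near (n := n) ⟨pt '' (T.1 : Set (Fin d → ℤ)), (Finset.coe_nonempty.2 T.2.1).image _, T.1.finite_toSet.image _,
        (Set.ncard_image_le T.1.finite_toSet).trans (by rw [Set.ncard_coe_finset]; exact T.2.2)⟩
        ⟨pt '' (T'.1 : Set (Fin d → ℤ)), (Finset.coe_nonempty.2 T'.2.1).image _, T'.1.finite_toSet.image _,
        (Set.ncard_image_le T'.1.finite_toSet).trans (by rw [Set.ncard_coe_finset]; exact T'.2.2)⟩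
        (x := pt x) ⟨x, hx, rfl⟩
      exact ⟨y, hy, hpt x y (hd.trans_lt h)⟩
    · intro x hx
      obtain ⟨_, ⟨y, hy, rfl⟩, hd⟩ := alr_exists_near' (n := n) ⟨pt '' (T.1 : Set (Fin d → ℤ)), (Finset.coe_nonempty.2 T.2.1).image _, T.1.finite_toSet.image _,
        (Set.ncard_image_le T.1.finite_toSet).trans (by rw [Set.ncard_coe_finset]; exact T.2.2)⟩
        ⟨pt '' (T'.1 : Set (Fin d → ℤ)), (Finset.coe_nonempty.2 T'.2.1).image _, T'.1.finite_toSet.image _,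
        (Set.ncard_image_le T'.1.finite_toSet).trans (by rw [Set.ncard_coe_finset]; exact T'.2.2)⟩
        (x := pt x) ⟨x, hx, rfl⟩
      exact ⟨y, hy, hpt x y (hd.trans_lt h)⟩

lemma alr_closed {E Y : Type*} [MetricSpace E] [ProperSpace E] [MetricSpace Y] (n : ℕ) (hn : 1 ≤ n)
    (ι : AlrFS E n → Y) (hι : ∀ S T, dist (ι S) (ι T) = Metric.hausdorffDist S.1 T.1) :
    IsClosed (Set.range ι) := by
  classical
  have : Nonempty (Fin n) := ⟨⟨0, hn⟩⟩
  let R : (Fin n → E) → AlrFS E n := fun x => ⟨Set.range x, Set.range_nonempty x, Set.finite_range x, by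
    rw [← Set.image_univ]
    refine (Set.ncard_image_le Set.finite_univ).trans ?_
    rw [Set.ncard_univ, Nat.card_fin]⟩
  have hR : Function.Surjective R := by
    intro S
    have : Finite S.1 := S.2.2.1
    have : Nonempty S.1 := S.2.1.to_subtype
    have : Fintype S.1 := Fintype.ofFinite _
    have hc : Fintype.card S.1 ≤ Fintype.card (Fin n) := by
      rw [Fintype.card_fin, ← Nat.card_eq_fintype_card]
      exact S.2.2.2
    obtain ⟨e⟩ := Function.Embedding.nonempty_of_card_le hc
    refine ⟨fun i => (Function.invFun e i : S.1), Subtype.ext ?_⟩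
    have hs := Function.invFun_surjective e.injective
    ext x
    constructor
    · rintro ⟨i, rfl⟩
      exact (Function.invFun e i).2
    · intro hx
      obtain ⟨i, hi⟩ := hs ⟨x, hx⟩
      exact ⟨i, by simp only [hi]⟩
  have hcont : Continuous (ι ∘ R) := by
    refine (LipschitzWith.of_dist_le_mul (K := 1) fun x x' => ?_).continuous
    simp only [Function.comp, hι, NNReal.coe_one, one_mul]
    refine Metric.hausdorffDist_le_of_mem_dist dist_nonneg ?_ ?_
    · rintro _ ⟨i, rfl⟩
      exact ⟨x' i, ⟨i, rfl⟩, dist_le_pi_dist x x' i⟩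
    · rintro _ ⟨i, rfl⟩
      exact ⟨x i, ⟨i, rfl⟩, by rw [dist_comm]; exact dist_le_pi_dist x x' i⟩
  refine isClosed_of_closure_subset fun y hy => ?_
  obtain ⟨_, ⟨S, rfl⟩, hS⟩ := Metric.mem_closure_iff.1 hy 1 one_pos
  obtain ⟨b, hb⟩ := S.2.1
  obtain ⟨ρ, hρ⟩ := S.2.2.1.isBounded.subset_closedBall b
  have hK : IsCompact (Metric.closedBall (fun _ : Fin n => b) (ρ + 2)) := isCompact_closedBall _ _
  have hKc := (hK.image hcont).isClosed
  have hρ0 : 0 ≤ ρ := by have := hρ hb; simpa using this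
  have hmem : y ∈ (ι ∘ R) '' Metric.closedBall (fun _ : Fin n => b) (ρ + 2) := by
    rw [← hKc.closure_eq, Metric.mem_closure_iff]
    intro ε hε
    obtain ⟨_, ⟨T, rfl⟩, hT⟩ := Metric.mem_closure_iff.1 hy (min ε 1) (lt_min hε one_pos)
    refine ⟨ι T, ?_, hT.trans_le (min_le_left _ _)⟩
    obtain ⟨x, rfl⟩ := hR T
    refine ⟨x, ?_, rfl⟩
    rw [Metric.mem_closedBall, dist_pi_le_iff (by linarith)]
    intro i
    obtain ⟨s, hs, hd⟩ := alr_exists_near (R x) S (x := x i) ⟨i, rfl⟩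
    rw [← hι] at hd
    have h1 := dist_triangle_left (ι (R x)) (ι S) y
    have h2 := hT.trans_le (min_le_right _ _)
    have h3 := hρ hs
    rw [Metric.mem_closedBall] at h3
    have := dist_triangle (x i) s b
    linarith
  obtain ⟨x, -, hx⟩ := hmem
  exact ⟨R x, hx⟩


/-- **Corollary 1.2.** For `d, n ≥ 1`, the space `ℝ^d(n)` of nonempty subsets of `ℝ^d` with
at most `n` elements, with the Hausdorff metric, is an absolute Lipschitz retract: for every
metric space `Y` and every isometric embedding `ι : ℝ^d(n) → Y`, there is a constant `L` and
an `L`-Lipschitz map `r : Y → ℝ^d(n)` with `r ∘ ι = id`. -/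
theorem euclidean_finite_subsets_absolute_lipschitz_retract
    (d n : ℕ) (hd : 1 ≤ d) (hn : 1 ≤ n)
    (Y : Type*) [MetricSpace Y]
    (ι : {S : Set (EuclideanSpace ℝ (Fin d)) // S.Nonempty ∧ S.Finite ∧ S.ncard ≤ n} → Y)
    (hι : ∀ S T, dist (ι S) (ι T) =
      Metric.hausdorffDist (S : Set (EuclideanSpace ℝ (Fin d))) (T : Set (EuclideanSpace ℝ (Fin d)))) :
    ∃ (L : ℝ) (r : Y → {S : Set (EuclideanSpace ℝ (Fin d)) // S.Nonempty ∧ S.Finite ∧ S.ncard ≤ n}),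
      (∀ y y' : Y,
        Metric.hausdorffDist (r y : Set (EuclideanSpace ℝ (Fin d))) (r y' : Set (EuclideanSpace ℝ (Fin d)))
          ≤ L * dist y y') ∧
      (∀ S, r (ι S) = S) := by

  classical
  have hinj : Function.Injective ι := by
    intro S T h
    have h0 : Metric.hausdorffDist S.1 T.1 = 0 := by rw [← hι, h, dist_self]
    apply Subtype.ext
    ext x
    constructor
    · intro hx
      obtain ⟨y, hy, hxy⟩ := alr_exists_near S T hx
      rw [h0] at hxy
      rwa [dist_le_zero.1 hxy]
    · intro hx
      obtain ⟨y, hy, hxy⟩ := alr_exists_near' S T hx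
      rw [h0] at hxy
      rwa [dist_le_zero.1 hxy]
  have hclosed := alr_closed n hn ι hι
  let z₀ : AlrFS (EuclideanSpace ℝ (Fin d)) n :=
    ⟨{0}, Set.singleton_nonempty _, Set.finite_singleton _, by rw [Set.ncard_singleton]; exact hn⟩
  have hne : (Set.range ι).Nonempty := ⟨ι z₀, z₀, rfl⟩
  let δ : Y → ℝ := fun y => Metric.infDist y (Set.range ι)
  have hδ : ∀ y y', δ y ≤ δ y' + dist y y' := fun y y' => Metric.infDist_le_infDist_add_dist
  have hδn : ∀ y, 0 < δ y → ∃ z, dist (ι z) y ≤ 2 * δ y := by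
    intro y hy
    obtain ⟨_, ⟨z, rfl⟩, hz⟩ := (Metric.infDist_lt_iff (r := 2 * δ y) hne).1
      (show δ y < 2 * δ y by linarith)
    exact ⟨z, by rw [dist_comm]; exact hz.le⟩
  obtain ⟨C, hC0, hC⟩ := alr_contract (E := EuclideanSpace ℝ (Fin d)) n
  obtain ⟨N, col, hnet⟩ := alr_net d n hd
  simp only [← hι] at hC hnet ⊢
  obtain ⟨Ψ, q, ρ, h1, h2, h3, h4⟩ := alr_cover ι δ hδ hδn z₀ N col hnet
  exact alr_core ι hinj δ hδ (fun y => Metric.infDist_nonneg)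
    (fun y hy => (hclosed.mem_iff_infDist_zero hne).2 hy)
    (fun z => Metric.infDist_zero_of_mem ⟨z, rfl⟩) hδn C hC0 hC 11 (by norm_num) (1 / 10)
    (by norm_num) Ψ q ρ h1 h2 h3 h4
end

section
/- Let H be a real Hilbert space, n ≥ 2, and let u = (u₁,…,uₙ) : [0, T) → H^n be a solution of the ODE system du_i/dt = Σ_{j≠i} (u_j − u_i)/‖u_j − u_i‖ whose coordinates are pairwise distinct at every time in [0, T). Then for every pair i ≠ j and all 0 ≤ s ≤ t < T, ‖u_i(t) − u_j(t)‖ ≤ ‖u_i(s) − u_j(s)‖ − 2(t − s). -/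
theorem unit_mono_aux {H : Type*} [NormedAddCommGroup H] [InnerProductSpace ℝ H] (a b : H) :
    inner ℝ (b - a) (‖a‖⁻¹ • a - ‖b‖⁻¹ • b) ≤ 0 := by
  by_cases ha : a = 0
  · subst ha
    simp only [sub_zero, smul_zero, zero_sub, inner_neg_right, inner_smul_right,
      real_inner_self_eq_norm_sq]
    have : 0 ≤ ‖b‖⁻¹ * ‖b‖ ^ 2 := by positivity
    linarith
  by_cases hb : b = 0
  · subst hb
    simp only [sub_zero, smul_zero, zero_sub, inner_neg_left, inner_smul_right,
      real_inner_self_eq_norm_sq]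
    have : 0 ≤ ‖a‖⁻¹ * ‖a‖ ^ 2 := by positivity
    linarith
  have ha' : 0 < ‖a‖ := norm_pos_iff.mpr ha
  have hb' : 0 < ‖b‖ := norm_pos_iff.mpr hb
  have hab := real_inner_le_norm a b
  simp only [inner_sub_left, inner_sub_right, inner_smul_right, real_inner_self_eq_norm_sq]
  rw [real_inner_comm a b]
  have h1 : ‖a‖⁻¹ * inner ℝ a b ≤ ‖b‖ := by
    rw [inv_mul_le_iff₀ ha']; exact hab
  have h2 : ‖b‖⁻¹ * inner ℝ a b ≤ ‖a‖ := by
    rw [inv_mul_le_iff₀ hb']; linarith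
  have h3 : ‖a‖⁻¹ * ‖a‖ ^ 2 = ‖a‖ := by field_simp
  have h4 : ‖b‖⁻¹ * ‖b‖ ^ 2 = ‖b‖ := by field_simp
  linarith

theorem inner_field_aux {H : Type*} [NormedAddCommGroup H] [InnerProductSpace ℝ H] {n : ℕ}
    (v : Fin n → H) (i j : Fin n) (hij : i ≠ j) (hv : v i ≠ v j) :
    inner ℝ (v i - v j)
      ((∑ k ∈ Finset.univ.erase i, (‖v k - v i‖)⁻¹ • (v k - v i)) -
       (∑ k ∈ Finset.univ.erase j, (‖v k - v j‖)⁻¹ • (v k - v j))) ≤ -2 * ‖v i - v j‖ := by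
  have hd : 0 < ‖v i - v j‖ := norm_pos_iff.mpr (sub_ne_zero.mpr hv)
  rw [Finset.sum_erase _ (by simp), Finset.sum_erase _ (by simp), ← Finset.sum_sub_distrib,
    inner_sum]
  have key : ∀ k ∈ (Finset.univ : Finset (Fin n)),
      inner ℝ (v i - v j) ((‖v k - v i‖)⁻¹ • (v k - v i) - (‖v k - v j‖)⁻¹ • (v k - v j)) ≤
      (if k = i then -‖v i - v j‖ else 0) + (if k = j then -‖v i - v j‖ else 0) := by
    intro k _
    by_cases hi : k = i
    · subst hi
      simp only [hij, sub_self, smul_zero, zero_sub, inner_neg_right, inner_smul_right,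
        real_inner_self_eq_norm_sq, if_true, if_false, add_zero]
      apply le_of_eq
      field_simp
    by_cases hj : k = j
    · subst hj
      simp only [hi, sub_self, smul_zero, sub_zero, inner_smul_right,
        if_true, if_false, zero_add]
      rw [← neg_sub (v i) (v k), inner_neg_right, norm_neg, real_inner_self_eq_norm_sq]
      apply le_of_eq
      field_simp
    · have := unit_mono_aux (v k - v i) (v k - v j)
      simpa [hi, hj] using this
  refine (Finset.sum_le_sum key).trans (le_of_eq ?_)
  rw [Finset.sum_add_distrib]
  simp
  ring

/-- Along a solution `u : [0, T) → H^n` of the gradient flow system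
`du_i/dt = ∑_{j ≠ i} (u_j − u_i)/‖u_j − u_i‖` with pairwise distinct coordinates,
each pairwise distance decreases at rate at least `2`:
`‖u_i(t) − u_j(t)‖ ≤ ‖u_i(s) − u_j(s)‖ − 2(t − s)` for `0 ≤ s ≤ t < T` and `i ≠ j`. -/
theorem pairwise_distance_decreases_along_flow
    {H : Type*} [NormedAddCommGroup H] [InnerProductSpace ℝ H] [CompleteSpace H]
    (n : ℕ) (hn : 2 ≤ n) (T : ℝ) (u : ℝ → Fin n → H)
    (hdistinct : ∀ t ∈ Set.Ico (0 : ℝ) T, ∀ i j : Fin n, i ≠ j → u t i ≠ u t j)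
    (hode : ∀ t ∈ Set.Ico (0 : ℝ) T, ∀ i : Fin n,
      HasDerivWithinAt (fun s => u s i)
        (∑ j ∈ Finset.univ.erase i, (‖u t j - u t i‖)⁻¹ • (u t j - u t i))
        (Set.Ico (0 : ℝ) T) t) :
    ∀ i j : Fin n, i ≠ j → ∀ s t : ℝ, 0 ≤ s → s ≤ t → t < T →
      ‖u t i - u t j‖ ≤ ‖u s i - u s j‖ - 2 * (t - s) := by
  intro i j hij s t hs hst ht
  have hsub : Set.Icc s t ⊆ Set.Ico (0 : ℝ) T := fun x hx => ⟨hs.trans hx.1, hx.2.trans_lt ht⟩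
  have hD := fun x (hx : x ∈ Set.Ico (0 : ℝ) T) => (hode x hx i).sub (hode x hx j)
  have hcont : ContinuousOn (fun x => ‖u x i - u x j‖ + 2 * x) (Set.Icc s t) := by
    have h1 : ContinuousOn (fun x => u x i - u x j) (Set.Icc s t) :=
      fun x hx => ((hD x (hsub hx)).continuousWithinAt).mono hsub
    exact h1.norm.add (by fun_prop)
  have hanti : AntitoneOn (fun x => ‖u x i - u x j‖ + 2 * x) (Set.Icc s t) := by
    refine antitoneOn_of_hasDerivWithinAt_nonpos (convex_Icc s t) hcont
      (f' := fun x => (2 * inner ℝ (u x i - u x j)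
      ((∑ k ∈ Finset.univ.erase i, (‖u x k - u x i‖)⁻¹ • (u x k - u x i)) -
       (∑ k ∈ Finset.univ.erase j, (‖u x k - u x j‖)⁻¹ • (u x k - u x j))))
        / (2 * √(‖u x i - u x j‖ ^ 2)) + 2 * 1) ?_ ?_
    · intro x hx
      have hx' := hsub (interior_subset hx)
      have hne : ‖u x i - u x j‖ ^ 2 ≠ 0 :=
        pow_ne_zero _ (norm_ne_zero_iff.mpr (sub_ne_zero.mpr (hdistinct x hx' i j hij)))
      have h2 := ((hD x hx').norm_sq.sqrt hne).add ((hasDerivWithinAt_id x _).const_mul 2)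
      have h3 := h2.mono (interior_subset.trans hsub)
      refine h3.congr_of_mem (fun y _ => ?_) hx
      simp [Real.sqrt_sq]
    · intro x hx
      have hx' := hsub (interior_subset hx)
      have hne := hdistinct x hx' i j hij
      have hd : 0 < ‖u x i - u x j‖ := norm_pos_iff.mpr (sub_ne_zero.mpr hne)
      have h := inner_field_aux (u x) i j hij hne
      rw [Real.sqrt_sq hd.le, ← le_neg_iff_add_nonpos_right, div_le_iff₀ (by positivity)]
      linarith
  have := hanti (Set.left_mem_Icc.mpr hst) (Set.right_mem_Icc.mpr hst) hst
  simp only at this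
  linarith
end

section
/- Let H be a real Hilbert space, n ≥ 2, and let x ∈ H^n have pairwise distinct coordinates. Then for every T with 0 < T < δ(x)/(2(n−1)) there exists a solution u : [0, T] → H^n of the ODE system du_i/dt = Σ_{j≠i} (u_j − u_i)/‖u_j − u_i‖ with u(0) = x whose coordinates remain pairwise distinct on all of [0, T]; moreover, for every i and all t ∈ [0, T], ‖u_i(t) − x_i‖ ≤ (n−1)t. -/
/-- Normalization is Lipschitz away from the origin. -/
lemma unit_lipschitz_aux {H : Type*} [NormedAddCommGroup H] [InnerProductSpace ℝ H]
    (c : ℝ) (hc : 0 < c) (v w : H) (hv : c ≤ ‖v‖) (hw : c ≤ ‖w‖) :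
    ‖‖v‖⁻¹ • v - ‖w‖⁻¹ • w‖ ≤ 2 / c * ‖v - w‖ := by
  have hv0 : 0 < ‖v‖ := hc.trans_le hv
  have hw0 : 0 < ‖w‖ := hc.trans_le hw
  have e : ‖v‖⁻¹ • v - ‖w‖⁻¹ • w = ‖v‖⁻¹ • ((v - w) + ((‖w‖ - ‖v‖) * ‖w‖⁻¹) • w) := by
    have h1 : ‖w‖⁻¹ = ‖v‖⁻¹ - ‖v‖⁻¹ * ((‖w‖ - ‖v‖) * ‖w‖⁻¹) := by
      field_simp
      ring
    rw [smul_add, smul_smul, smul_sub]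
    nth_rewrite 1 [h1]
    rw [sub_smul]
    abel
  have h2 : ‖((‖w‖ - ‖v‖) * ‖w‖⁻¹) • w‖ ≤ ‖v - w‖ := by
    rw [norm_smul, norm_mul, norm_inv, norm_norm, mul_assoc, inv_mul_cancel₀ hw0.ne', mul_one,
      norm_sub_rev v w]
    exact abs_norm_sub_norm_le w v
  rw [e, norm_smul, norm_inv, norm_norm]
  calc ‖v‖⁻¹ * ‖(v - w) + ((‖w‖ - ‖v‖) * ‖w‖⁻¹) • w‖
      ≤ c⁻¹ * (‖v - w‖ + ‖v - w‖) := by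
        gcongr
        exact (norm_add_le _ _).trans (by gcongr)
    _ = 2 / c * ‖v - w‖ := by ring

/-- The velocity of each coordinate is bounded by `n - 1`. -/
lemma field_norm_aux {H : Type*} [NormedAddCommGroup H] [InnerProductSpace ℝ H]
    (n : ℕ) (y : Fin n → H) (i : Fin n) :
    ‖∑ j ∈ Finset.univ.erase i, (‖y j - y i‖)⁻¹ • (y j - y i)‖ ≤ (n : ℝ) - 1 := by
  have hn : 1 ≤ n := by have := i.2; omega
  refine (norm_sum_le_of_le (f := fun j => (‖y j - y i‖)⁻¹ • (y j - y i)) _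
    (n := fun _ => (1 : ℝ)) fun j _ => ?_).trans ?_
  · rw [norm_smul, norm_inv, norm_norm]
    exact inv_mul_le_one
  · simp [Finset.card_erase_of_mem, Nat.cast_sub hn]

/-- Short-time existence of the gradient flow. If `x ∈ H^n` has pairwise distinct coordinates
and `0 < T < δ(x)/(2(n−1))`, where `δ(x) = min_{i<j} ‖x_i − x_j‖`, then there is a solution
`u : [0, T] → H^n` of `du_i/dt = ∑_{j ≠ i} (u_j − u_i)/‖u_j − u_i‖`, `u(0) = x`, whose
coordinates stay pairwise distinct on `[0, T]` and satisfy `‖u_i(t) − x_i‖ ≤ (n−1)t`. -/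
theorem flow_short_time_existence
    {H : Type*} [NormedAddCommGroup H] [InnerProductSpace ℝ H] [CompleteSpace H]
    (n : ℕ) (hn : 2 ≤ n) (x : Fin n → H)
    (hx : ∀ i j : Fin n, i ≠ j → x i ≠ x j)
    (T : ℝ) (hT0 : 0 < T)
    (hT : T < sInf {d : ℝ | ∃ i j : Fin n, i < j ∧ d = ‖x i - x j‖} / (2 * ((n : ℝ) - 1))) :
    ∃ u : ℝ → Fin n → H,
      u 0 = x ∧
      (∀ t ∈ Set.Icc (0 : ℝ) T, ∀ i j : Fin n, i ≠ j → u t i ≠ u t j) ∧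
      (∀ t ∈ Set.Icc (0 : ℝ) T, ∀ i : Fin n,
        HasDerivWithinAt (fun s => u s i)
          (∑ j ∈ Finset.univ.erase i, (‖u t j - u t i‖)⁻¹ • (u t j - u t i))
          (Set.Icc (0 : ℝ) T) t) ∧
      (∀ t ∈ Set.Icc (0 : ℝ) T, ∀ i : Fin n, ‖u t i - x i‖ ≤ ((n : ℝ) - 1) * t) := by
  classical
  set δ := sInf {d : ℝ | ∃ i j : Fin n, i < j ∧ d = ‖x i - x j‖} with hδ
  have hn2 : (2 : ℝ) ≤ n := by exact_mod_cast hn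
  have hn1 : (0 : ℝ) < (n : ℝ) - 1 := by linarith
  have hδle : ∀ i j : Fin n, i ≠ j → δ ≤ ‖x i - x j‖ := by
    have hb : BddBelow {d : ℝ | ∃ i j : Fin n, i < j ∧ d = ‖x i - x j‖} :=
      ⟨0, by rintro d ⟨i, j, _, rfl⟩; exact norm_nonneg _⟩
    intro i j hij
    rcases lt_or_gt_of_ne hij with h | h
    · exact csInf_le hb ⟨i, j, h, rfl⟩
    · rw [norm_sub_rev]
      exact csInf_le hb ⟨j, i, h, rfl⟩
  have hTδ : T * (2 * ((n : ℝ) - 1)) < δ := (lt_div_iff₀ (by positivity)).1 hT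
  set c : ℝ := δ - T * (2 * ((n : ℝ) - 1)) with hcdef
  have hc : 0 < c := by rw [hcdef]; linarith
  -- separation inside the ball
  have hsep : ∀ y : Fin n → H, (∀ i, ‖y i - x i‖ ≤ ((n : ℝ) - 1) * T) →
      ∀ i j : Fin n, i ≠ j → c ≤ ‖y i - y j‖ := by
    intro y hy i j hij
    have h1 := hδle i j hij
    have h2 : ‖x i - x j‖ ≤ ‖y i - y j‖ + ‖y i - x i‖ + ‖y j - x j‖ := by
      have e : x i - x j = (y i - y j) - (y i - x i) + (y j - x j) := by abel
      rw [e]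
      exact (norm_add_le _ _).trans (by gcongr; exact norm_sub_le _ _)
    have h3 := hy i
    have h4 := hy j
    rw [hcdef]
    linarith
  let F : ℝ → (Fin n → H) → (Fin n → H) := fun _ y i =>
    ∑ j ∈ Finset.univ.erase i, (‖y j - y i‖)⁻¹ • (y j - y i)
  let L : NNReal := ⟨(n : ℝ) - 1, hn1.le⟩
  let a : NNReal := ⟨((n : ℝ) - 1) * T, by positivity⟩
  let K : NNReal := ⟨(n : ℝ) * (4 / c), by positivity⟩
  have hball : ∀ y ∈ Metric.closedBall x (a : ℝ), ∀ i, ‖y i - x i‖ ≤ ((n : ℝ) - 1) * T := by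
    intro y hy i
    rw [mem_closedBall_iff_norm] at hy
    exact (norm_le_pi_norm (y - x) i).trans hy
  have hPL : IsPicardLindelof F (tmin := 0) (tmax := T) ⟨0, le_rfl, hT0.le⟩ x a 0 L K := by
    refine ⟨?_, fun _ _ => continuousOn_const, ?_, ?_⟩
    · intro t _
      refine LipschitzOnWith.of_dist_le_mul fun y hy z hz => ?_
      rw [dist_eq_norm, dist_eq_norm]
      refine (pi_norm_le_iff_of_nonneg (by positivity)).2 fun i => ?_
      change ‖(∑ j ∈ Finset.univ.erase i, (‖y j - y i‖)⁻¹ • (y j - y i))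
        - ∑ j ∈ Finset.univ.erase i, (‖z j - z i‖)⁻¹ • (z j - z i)‖ ≤ (n : ℝ) * (4 / c) * ‖y - z‖
      rw [← Finset.sum_sub_distrib]
      refine (norm_sum_le_of_le _ (n := fun _ => 4 / c * ‖y - z‖) fun j hj => ?_).trans ?_
      · have hji : j ≠ i := Finset.ne_of_mem_erase hj
        refine (unit_lipschitz_aux c hc _ _ (hsep y (hball y hy) j i hji)
          (hsep z (hball z hz) j i hji)).trans ?_
        have h5 : ‖(y j - y i) - (z j - z i)‖ ≤ ‖y - z‖ + ‖y - z‖ := by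
          have e : (y j - y i) - (z j - z i) = (y - z) j - (y - z) i := by
            simp only [Pi.sub_apply]; abel
          rw [e]
          exact (norm_sub_le _ _).trans
            (add_le_add (norm_le_pi_norm (y - z) j) (norm_le_pi_norm (y - z) i))
        calc 2 / c * ‖(y j - y i) - (z j - z i)‖ ≤ 2 / c * (‖y - z‖ + ‖y - z‖) := by gcongr
          _ = 4 / c * ‖y - z‖ := by ring
      · rw [Finset.sum_const, nsmul_eq_mul, mul_assoc]
        gcongr
        exact (Finset.card_le_univ _).trans (by simp)
    · intro t _ y _
      exact (pi_norm_le_iff_of_nonneg hn1.le).2 fun i => field_norm_aux n y i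
    · change ((n : ℝ) - 1) * max (T - 0) (0 - 0) ≤ ((n : ℝ) - 1) * T - 0
      simp [hT0.le]
  obtain ⟨u, hu0, hu⟩ := hPL.exists_eq_forall_mem_Icc_hasDerivWithinAt₀
  have hu0 : u 0 = x := hu0
  have hd : ∀ t ∈ Set.Icc (0 : ℝ) T, ∀ i : Fin n,
        HasDerivWithinAt (fun s => u s i)
          (∑ j ∈ Finset.univ.erase i, (‖u t j - u t i‖)⁻¹ • (u t j - u t i))
          (Set.Icc (0 : ℝ) T) t := fun t ht i => hasDerivWithinAt_pi.1 (hu t ht) i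
  have hbound : ∀ t ∈ Set.Icc (0 : ℝ) T, ∀ i : Fin n,
      ‖u t i - x i‖ ≤ ((n : ℝ) - 1) * t := by
    intro t ht i
    have := norm_image_sub_le_of_norm_deriv_le_segment' (fun s hs => hd s hs i)
      (fun s _ => field_norm_aux n (u s) i) t ht
    simpa [hu0] using this
  refine ⟨u, hu0, fun t ht i j hij heq => ?_, hd, hbound⟩
  have h := hsep (u t) (fun k => (hbound t ht k).trans
    (mul_le_mul_of_nonneg_left ht.2 hn1.le)) i j hij
  rw [heq, sub_self, norm_zero] at h
  linarith
end

section
/- Let H be a real Hilbert space, n ≥ 2, and let u, v : [0, T) → H^n be two solutions of the ODE system du_i/dt = Σ_{j≠i} (u_j − u_i)/‖u_j − u_i‖, each with pairwise distinct coordinates at every time in [0, T). Then the function t ↦ Σ_{i=1}^n ‖u_i(t) − v_i(t)‖² is nonincreasing on [0, T). -/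
lemma unit_monotone {H : Type*} [NormedAddCommGroup H] [InnerProductSpace ℝ H] (a b : H) :
    0 ≤ inner ℝ (a - b) (‖a‖⁻¹ • a - ‖b‖⁻¹ • b) := by
  have hself : ∀ x : H, inner ℝ x (‖x‖⁻¹ • x) = ‖x‖ := by
    intro x
    rw [inner_smul_right, real_inner_self_eq_norm_sq]
    by_cases h : ‖x‖ = 0
    · simp [h]
    · field_simp
  have hcross : ∀ x y : H, inner ℝ x (‖y‖⁻¹ • y) ≤ ‖x‖ := by
    intro x y
    refine (real_inner_le_norm _ _).trans ?_
    have : ‖‖y‖⁻¹ • y‖ ≤ 1 := by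
      rw [norm_smul, norm_inv, norm_norm]
      exact inv_mul_le_one
    nlinarith [norm_nonneg x]
  rw [inner_sub_left, inner_sub_right, inner_sub_right, hself, hself]
  linarith [hcross a b, hcross b a]

lemma vf_dissipative {H : Type*} [NormedAddCommGroup H] [InnerProductSpace ℝ H]
    {n : ℕ} (x y : Fin n → H) :
    ∑ i, inner ℝ (x i - y i)
      ((∑ j ∈ Finset.univ.erase i, (‖x j - x i‖)⁻¹ • (x j - x i)) -
        (∑ j ∈ Finset.univ.erase i, (‖y j - y i‖)⁻¹ • (y j - y i))) ≤ 0 := by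
  have her : ∀ (z : Fin n → H) i,
      (∑ j ∈ Finset.univ.erase i, (‖z j - z i‖)⁻¹ • (z j - z i)) =
        ∑ j, (‖z j - z i‖)⁻¹ • (z j - z i) := by
    intro z i
    exact Finset.sum_erase _ (by simp)
  simp only [her, ← Finset.sum_sub_distrib, inner_sum]
  set F : Fin n → Fin n → ℝ := fun i j => inner ℝ (x i - y i)
    ((‖x j - x i‖)⁻¹ • (x j - x i) - (‖y j - y i‖)⁻¹ • (y j - y i)) with hF
  have hpair : ∀ i j, F i j + F j i ≤ 0 := by
    intro i j
    have h := unit_monotone (x j - x i) (y j - y i)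
    have e : F i j + F j i = - inner ℝ ((x j - x i) - (y j - y i))
        ((‖x j - x i‖)⁻¹ • (x j - x i) - (‖y j - y i‖)⁻¹ • (y j - y i)) := by
      simp only [hF]
      rw [norm_sub_rev (x i) (x j), norm_sub_rev (y i) (y j), ← neg_sub (x j) (x i),
        ← neg_sub (y j) (y i), smul_neg, smul_neg, neg_sub_neg,
        ← neg_sub (‖x j - x i‖⁻¹ • (x j - x i)), inner_neg_right,
        show (x j - x i) - (y j - y i) = (x j - y j) - (x i - y i) by abel,
        inner_sub_left (x j - y j) (x i - y i)]
      ring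
    linarith
  have hsum : ∑ i, ∑ j, (F i j + F j i) ≤ 0 :=
    Finset.sum_nonpos fun i _ => Finset.sum_nonpos fun j _ => hpair i j
  simp only [Finset.sum_add_distrib] at hsum
  rw [Finset.sum_comm (f := fun i j => F j i)] at hsum
  change ∑ i, ∑ j, F i j ≤ 0
  linarith

/-- **Lemma 2.1.** If `u, v : [0, T) → H^n` are two solutions of
`du_i/dt = ∑_{j ≠ i} (u_j − u_i)/‖u_j − u_i‖`, each with pairwise distinct coordinates,
then `t ↦ ∑ i ‖u_i(t) − v_i(t)‖²` is nonincreasing on `[0, T)`. -/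
theorem flow_nonexpansive
    {H : Type*} [NormedAddCommGroup H] [InnerProductSpace ℝ H] [CompleteSpace H]
    (n : ℕ) (hn : 2 ≤ n) (T : ℝ) (u v : ℝ → Fin n → H)
    (hu_distinct : ∀ t ∈ Set.Ico (0 : ℝ) T, ∀ i j : Fin n, i ≠ j → u t i ≠ u t j)
    (hv_distinct : ∀ t ∈ Set.Ico (0 : ℝ) T, ∀ i j : Fin n, i ≠ j → v t i ≠ v t j)
    (hu_ode : ∀ t ∈ Set.Ico (0 : ℝ) T, ∀ i : Fin n,
      HasDerivWithinAt (fun s => u s i)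
        (∑ j ∈ Finset.univ.erase i, (‖u t j - u t i‖)⁻¹ • (u t j - u t i))
        (Set.Ico (0 : ℝ) T) t)
    (hv_ode : ∀ t ∈ Set.Ico (0 : ℝ) T, ∀ i : Fin n,
      HasDerivWithinAt (fun s => v s i)
        (∑ j ∈ Finset.univ.erase i, (‖v t j - v t i‖)⁻¹ • (v t j - v t i))
        (Set.Ico (0 : ℝ) T) t) :
    AntitoneOn (fun t : ℝ => ∑ i : Fin n, ‖u t i - v t i‖ ^ 2) (Set.Ico (0 : ℝ) T) := by
  have hd : ∀ t ∈ Set.Ico (0 : ℝ) T,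
      HasDerivWithinAt (fun t : ℝ => ∑ i : Fin n, ‖u t i - v t i‖ ^ 2)
        (∑ i, 2 * inner ℝ (u t i - v t i)
          ((∑ j ∈ Finset.univ.erase i, (‖u t j - u t i‖)⁻¹ • (u t j - u t i)) -
            (∑ j ∈ Finset.univ.erase i, (‖v t j - v t i‖)⁻¹ • (v t j - v t i))))
        (Set.Ico (0 : ℝ) T) t := by
    intro t ht
    exact HasDerivWithinAt.fun_sum fun i _ => ((hu_ode t ht i).sub (hv_ode t ht i)).norm_sq
  refine antitoneOn_of_hasDerivWithinAt_nonpos (convex_Ico 0 T)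
    (fun t ht => (hd t ht).continuousWithinAt)
    (fun t ht => (hd t (interior_subset ht)).mono interior_subset) ?_
  intro t _
  rw [← Finset.mul_sum]
  linarith [vf_dissipative (u t) (v t)]
end

section
/- Let H be a real Hilbert space, n ≥ 2, and let u, v : [0, T) → H^n be two solutions of the ODE system du_i/dt = Σ_{j≠i} (u_j − u_i)/‖u_j − u_i‖, each with pairwise distinct coordinates at every time in [0, T), with initial values u(0) = x and v(0) = y. Then for every t ∈ [0, T), the Hausdorff distance between the sets {u₁(t),…,uₙ(t)} and {v₁(t),…,vₙ(t)} is at most √n · max_{1≤i≤n} ‖x_i − y_i‖. -/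
/-- Monotonicity of the normalization map. -/
lemma normalize_mono_aux {H : Type*} [NormedAddCommGroup H] [InnerProductSpace ℝ H] (a b : H) :
    0 ≤ inner ℝ (a - b) ((‖a‖)⁻¹ • a - (‖b‖)⁻¹ • b) := by
  have h := real_inner_le_norm a b
  rcases eq_or_ne a 0 with rfl | ha
  · simp only [zero_sub, smul_zero, inner_neg_neg, inner_smul_right]
    exact mul_nonneg (by positivity) real_inner_self_nonneg
  rcases eq_or_ne b 0 with rfl | hb
  · simp only [sub_zero, smul_zero, inner_smul_right]
    exact mul_nonneg (by positivity) real_inner_self_nonneg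
  have ha' : 0 < ‖a‖ := norm_pos_iff.2 ha
  have hb' : 0 < ‖b‖ := norm_pos_iff.2 hb
  simp only [inner_sub_left, inner_sub_right, inner_smul_right, real_inner_self_eq_norm_sq,
    real_inner_comm a b]
  have e1 : (‖a‖)⁻¹ * inner ℝ a b ≤ ‖b‖ := by
    rw [inv_mul_le_iff₀ ha']; exact h
  have e2 : (‖b‖)⁻¹ * inner ℝ a b ≤ ‖a‖ := by
    rw [inv_mul_le_iff₀ hb']; linarith
  have e3 : (‖a‖)⁻¹ * ‖a‖ ^ 2 = ‖a‖ := by field_simp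
  have e4 : (‖b‖)⁻¹ * ‖b‖ ^ 2 = ‖b‖ := by field_simp
  have hc := real_inner_comm a b
  simp only [hc] at *
  linarith

lemma sum_inner_nonpos_aux {H : Type*} [NormedAddCommGroup H] [InnerProductSpace ℝ H] {n : ℕ}
    (p q : Fin n → H) :
    ∑ i, inner ℝ (p i - q i)
      ((∑ j ∈ Finset.univ.erase i, (‖p j - p i‖)⁻¹ • (p j - p i)) -
       (∑ j ∈ Finset.univ.erase i, (‖q j - q i‖)⁻¹ • (q j - q i))) ≤ 0 := by
  have he : ∀ (r : Fin n → H) i, ∑ j ∈ Finset.univ.erase i, (‖r j - r i‖)⁻¹ • (r j - r i)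
      = ∑ j, (‖r j - r i‖)⁻¹ • (r j - r i) := by
    intro r i
    exact Finset.sum_erase _ (by simp)
  simp only [he, ← Finset.sum_sub_distrib, inner_sum]
  set F : Fin n → Fin n → ℝ := fun i j => inner ℝ (p i - q i)
    ((‖p j - p i‖)⁻¹ • (p j - p i) - (‖q j - q i‖)⁻¹ • (q j - q i)) with hF
  have hc : ∑ i, ∑ j, F i j = ∑ i, ∑ j, F j i := Finset.sum_comm
  have hs : ∑ i, ∑ j, (F i j + F j i) ≤ 0 := by
    refine Finset.sum_nonpos fun i _ => Finset.sum_nonpos fun j _ => ?_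
    have hm := normalize_mono_aux (p j - p i) (q j - q i)
    have h1 : F j i = - inner ℝ (p j - q j)
        ((‖p j - p i‖)⁻¹ • (p j - p i) - (‖q j - q i‖)⁻¹ • (q j - q i)) := by
      rw [hF, ← inner_neg_right]
      simp only
      rw [norm_sub_rev (p i), norm_sub_rev (q i), ← neg_sub (p j) (p i), ← neg_sub (q j) (q i)]
      congr 1
      simp only [smul_neg]
      abel
    have h2 : p j - p i - (q j - q i) = (p j - q j) - (p i - q i) := by abel
    rw [h2, inner_sub_left] at hm
    rw [h1]
    simp only [hF]
    linarith
  simp only [Finset.sum_add_distrib] at hs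
  linarith

/-- **Inequality (9).** If `u, v : [0, T) → H^n` solve
`du_i/dt = ∑_{j ≠ i} (u_j − u_i)/‖u_j − u_i‖` with pairwise distinct coordinates and initial
values `x, y`, then for all `t ∈ [0, T)` the Hausdorff distance between `{u₁(t),…,uₙ(t)}` and
`{v₁(t),…,vₙ(t)}` is at most `√n · max_i ‖x_i − y_i‖`. -/
theorem hausdorff_stability_along_flow
    {H : Type*} [NormedAddCommGroup H] [InnerProductSpace ℝ H] [CompleteSpace H]
    (n : ℕ) (hn : 2 ≤ n) (T : ℝ) (x y : Fin n → H) (u v : ℝ → Fin n → H)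
    (hu0 : u 0 = x) (hv0 : v 0 = y)
    (hu_distinct : ∀ t ∈ Set.Ico (0 : ℝ) T, ∀ i j : Fin n, i ≠ j → u t i ≠ u t j)
    (hv_distinct : ∀ t ∈ Set.Ico (0 : ℝ) T, ∀ i j : Fin n, i ≠ j → v t i ≠ v t j)
    (hu_ode : ∀ t ∈ Set.Ico (0 : ℝ) T, ∀ i : Fin n,
      HasDerivWithinAt (fun s => u s i)
        (∑ j ∈ Finset.univ.erase i, (‖u t j - u t i‖)⁻¹ • (u t j - u t i))
        (Set.Ico (0 : ℝ) T) t)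
    (hv_ode : ∀ t ∈ Set.Ico (0 : ℝ) T, ∀ i : Fin n,
      HasDerivWithinAt (fun s => v s i)
        (∑ j ∈ Finset.univ.erase i, (‖v t j - v t i‖)⁻¹ • (v t j - v t i))
        (Set.Ico (0 : ℝ) T) t) :
    ∀ t ∈ Set.Ico (0 : ℝ) T,
      Metric.hausdorffDist (Set.range (u t)) (Set.range (v t)) ≤
        Real.sqrt n * sSup {d : ℝ | ∃ i : Fin n, d = ‖x i - y i‖} := by
  intro t ht
  set M := sSup {d : ℝ | ∃ i : Fin n, d = ‖x i - y i‖} with hM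
  have hfin : {d : ℝ | ∃ i : Fin n, d = ‖x i - y i‖}.Finite := by
    have : {d : ℝ | ∃ i : Fin n, d = ‖x i - y i‖} = Set.range fun i => ‖x i - y i‖ := by
      ext d; simp [eq_comm]
    rw [this]; exact Set.finite_range _
  have hle : ∀ i, ‖x i - y i‖ ≤ M := fun i => le_csSup hfin.bddAbove ⟨i, rfl⟩
  have hM0 : 0 ≤ M := (norm_nonneg _).trans (hle ⟨0, by omega⟩)
  have hd : ∀ s ∈ Set.Ico (0 : ℝ) T, HasDerivWithinAt (fun s => ∑ i, ‖u s i - v s i‖ ^ 2)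
      (∑ i, 2 * inner ℝ (u s i - v s i)
      ((∑ j ∈ Finset.univ.erase i, (‖u s j - u s i‖)⁻¹ • (u s j - u s i)) -
       (∑ j ∈ Finset.univ.erase i, (‖v s j - v s i‖)⁻¹ • (v s j - v s i))))
      (Set.Ico (0 : ℝ) T) s := by
    intro s hs
    exact HasDerivWithinAt.fun_sum fun i _ => ((hu_ode s hs i).fun_sub (hv_ode s hs i)).norm_sq
  have hanti : AntitoneOn (fun s => ∑ i, ‖u s i - v s i‖ ^ 2) (Set.Ico (0 : ℝ) T) := by
    refine antitoneOn_of_hasDerivWithinAt_nonpos (convex_Ico 0 T)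
      (fun s hs => (hd s hs).continuousWithinAt)
      (fun s hs => (hd s (interior_subset hs)).mono interior_subset) ?_
    intro s _
    rw [← Finset.mul_sum]
    have := sum_inner_nonpos_aux (u s) (v s)
    linarith
  have h0 := hanti ⟨le_refl 0, ht.1.trans_lt ht.2⟩ ht ht.1
  simp only [hu0, hv0] at h0
  have h1 : ∑ i, ‖x i - y i‖ ^ 2 ≤ n * M ^ 2 := by
    calc ∑ i, ‖x i - y i‖ ^ 2 ≤ ∑ _i : Fin n, M ^ 2 :=
          Finset.sum_le_sum fun i _ => pow_le_pow_left₀ (norm_nonneg _) (hle i) 2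
      _ = n * M ^ 2 := by simp
  have h2 : ∀ i, dist (u t i) (v t i) ≤ Real.sqrt n * M := by
    intro i
    rw [dist_eq_norm]
    refine (sq_le_sq₀ (norm_nonneg _) (by positivity)).1 ?_
    rw [mul_pow, Real.sq_sqrt (Nat.cast_nonneg n)]
    have := Finset.single_le_sum (f := fun i => ‖u t i - v t i‖ ^ 2)
      (fun i _ => by positivity) (Finset.mem_univ i)
    linarith
  refine Metric.hausdorffDist_le_of_mem_dist (by positivity) ?_ ?_
  · rintro _ ⟨i, rfl⟩
    exact ⟨v t i, ⟨i, rfl⟩, h2 i⟩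
  · rintro _ ⟨i, rfl⟩
    exact ⟨u t i, ⟨i, rfl⟩, by rw [dist_comm]; exact h2 i⟩
end

section
/- Let H be a real Hilbert space, n ≥ 2, and let u : [0, T] → H^n be a solution of the ODE system du_i/dt = Σ_{j≠i} (u_j − u_i)/‖u_j − u_i‖ whose coordinates are pairwise distinct at every time in [0, T). Then the Hausdorff distance between the sets {u₁(T),…,uₙ(T)} and {u₁(0),…,uₙ(0)} is at most ((n−1)/2) · δ(u(0)), where δ(x) = min_{i<j} ‖x_i − x_j‖. -/
section helpers
variable {H : Type*} [NormedAddCommGroup H] [InnerProductSpace ℝ H]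

lemma hb_norm_le (x : H) : ‖(‖x‖)⁻¹ • x‖ ≤ 1 := by
  rw [norm_smul, norm_inv, norm_norm]
  exact inv_mul_le_one

lemma hb_inner_self (x : H) : inner ℝ x ((‖x‖)⁻¹ • x) = ‖x‖ := by
  rw [inner_smul_right, real_inner_self_eq_norm_sq]
  by_cases h : ‖x‖ = 0
  · simp [h]
  · field_simp

lemma hb_inner_le (x y : H) : inner ℝ x ((‖y‖)⁻¹ • y) ≤ ‖x‖ := by
  refine (real_inner_le_norm _ _).trans ?_
  exact mul_le_of_le_one_right (norm_nonneg _) (hb_norm_le y)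

lemma hb_mono (p q : H) :
    inner ℝ (q - p) ((‖p‖)⁻¹ • p - (‖q‖)⁻¹ • q) ≤ 0 := by
  have h1 := hb_inner_self p
  have h2 := hb_inner_self q
  have h3 := hb_inner_le p q
  have h4 := hb_inner_le q p
  rw [inner_sub_left, inner_sub_right, inner_sub_right]
  linarith

lemma hb_erase {n : ℕ} (x : Fin n → H) (i : Fin n) :
    ∑ j ∈ Finset.univ.erase i, (‖x j - x i‖)⁻¹ • (x j - x i)
      = ∑ j, (‖x j - x i‖)⁻¹ • (x j - x i) :=
  Finset.sum_erase _ (by simp)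

lemma hb_key {n : ℕ} (x : Fin n → H) (i j : Fin n) (hij : i ≠ j) :
    inner ℝ (x i - x j)
      ((∑ k ∈ Finset.univ.erase i, (‖x k - x i‖)⁻¹ • (x k - x i))
        - ∑ k ∈ Finset.univ.erase j, (‖x k - x j‖)⁻¹ • (x k - x j)) ≤ -2 * ‖x i - x j‖ := by
  rw [hb_erase, hb_erase, ← Finset.sum_sub_distrib, inner_sum]
  have : ∑ k, ((if k = i then -‖x i - x j‖ else 0) + (if k = j then -‖x i - x j‖ else 0))
      = -2 * ‖x i - x j‖ := by
    rw [Finset.sum_add_distrib]; simp; ring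
  rw [← this]
  refine Finset.sum_le_sum fun k _ => ?_
  by_cases hi : k = i
  · subst hi
    have := hb_inner_self (x k - x j)
    simp only [sub_self, smul_zero, zero_sub, inner_neg_right, this]
    simp [hij]
  by_cases hj : k = j
  · subst hj
    have := hb_inner_self (x i - x k)
    have h2 : (‖x k - x i‖)⁻¹ • (x k - x i) = -((‖x i - x k‖)⁻¹ • (x i - x k)) := by
      rw [norm_sub_rev, ← smul_neg, neg_sub]
    simp only [sub_self, smul_zero, sub_zero, h2, inner_neg_right, this]
    simp [hi]
  · have := hb_mono (x k - x i) (x k - x j)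
    rw [sub_sub_sub_cancel_left] at this
    simpa [hi, hj] using this

end helpers


/-- **Inequality (7).** If `u : [0, T] → H^n` solves
`du_i/dt = ∑_{j ≠ i} (u_j − u_i)/‖u_j − u_i‖` with pairwise distinct coordinates at every
time in `[0, T)`, then the Hausdorff distance between `{u₁(T),…,uₙ(T)}` and
`{u₁(0),…,uₙ(0)}` is at most `((n−1)/2) · δ(u(0))`, where `δ(x) = min_{i<j} ‖x_i − x_j‖`. -/
theorem flow_endpoint_hausdorff_bound
    {H : Type*} [NormedAddCommGroup H] [InnerProductSpace ℝ H] [CompleteSpace H]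
    (n : ℕ) (hn : 2 ≤ n) (T : ℝ) (hT : 0 ≤ T) (u : ℝ → Fin n → H)
    (hcont : ∀ i : Fin n, ContinuousOn (fun s => u s i) (Set.Icc (0 : ℝ) T))
    (hdistinct : ∀ t ∈ Set.Ico (0 : ℝ) T, ∀ i j : Fin n, i ≠ j → u t i ≠ u t j)
    (hode : ∀ t ∈ Set.Ico (0 : ℝ) T, ∀ i : Fin n,
      HasDerivWithinAt (fun s => u s i)
        (∑ j ∈ Finset.univ.erase i, (‖u t j - u t i‖)⁻¹ • (u t j - u t i))
        (Set.Icc (0 : ℝ) T) t) :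
    Metric.hausdorffDist (Set.range (u T)) (Set.range (u 0)) ≤
      (((n : ℝ) - 1) / 2) * sInf {d : ℝ | ∃ i j : Fin n, i < j ∧ d = ‖u 0 i - u 0 j‖} := by

  have hpair : ∀ i j : Fin n, i ≠ j → 2 * T ≤ ‖u 0 i - u 0 j‖ := by
    intro i j hij
    have hd : ∀ t ∈ interior (Set.Icc (0 : ℝ) T), ∃ c ≤ (0 : ℝ),
        HasDerivAt (fun s => ‖u s i - u s j‖ + 2 * s) c t := by
      intro t ht
      rw [interior_Icc] at ht
      have htc : t ∈ Set.Ico (0 : ℝ) T := ⟨ht.1.le, ht.2⟩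
      have hn0 : 0 < ‖u t i - u t j‖ := norm_pos_iff.2 (sub_ne_zero.2 (hdistinct t htc i j hij))
      have hi := (hode t htc i).hasDerivAt (Icc_mem_nhds ht.1 ht.2)
      have hj := (hode t htc j).hasDerivAt (Icc_mem_nhds ht.1 ht.2)
      have hs := ((hi.sub hj).norm_sq).sqrt (by simpa using hn0.ne')
      have h2 := hs.add ((hasDerivAt_id t).const_mul (2 : ℝ))
      have hk := hb_key (u t) i j hij
      refine ⟨_, ?_, h2.congr_of_eventuallyEq (Filter.Eventually.of_forall fun s => ?_)⟩
      · simp only [Pi.sub_apply, Real.sqrt_sq (norm_nonneg _)]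
        have : ∀ a b : ℝ, 0 < b → a ≤ -2 * b → 2 * a / (2 * b) + 2 * 1 ≤ 0 := by
          intro a b hb h
          have : 2 * a / (2 * b) ≤ -2 := by
            rw [div_le_iff₀ (by positivity)]; linarith
          linarith
        exact this _ _ hn0 hk
      · simp [Real.sqrt_sq (norm_nonneg _)]
    have hanti : AntitoneOn (fun s => ‖u s i - u s j‖ + 2 * s) (Set.Icc (0 : ℝ) T) := by
      refine antitoneOn_of_deriv_nonpos (convex_Icc 0 T) ?_ ?_ ?_
      · exact (((hcont i).sub (hcont j)).norm).add (by fun_prop)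
      · intro t ht
        obtain ⟨c, _, hc⟩ := hd t ht
        exact hc.differentiableAt.differentiableWithinAt
      · intro t ht
        obtain ⟨c, hc0, hc⟩ := hd t ht
        rw [hc.deriv]; exact hc0
    have := hanti (Set.left_mem_Icc.2 hT) (Set.right_mem_Icc.2 hT) hT
    have h0 := norm_nonneg (u T i - u T j)
    simp only at this
    linarith
  have hmove : ∀ i : Fin n, ‖u T i - u 0 i‖ ≤ ((n : ℝ) - 1) * (T - 0) := by
    intro i
    refine norm_image_sub_le_of_norm_deriv_right_le_segment (f := fun s => u s i)
      (hcont i) (fun t ht => (hode t ht i).mono_of_mem_nhdsWithin ?_) ?_ T (Set.right_mem_Icc.2 hT)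
    · exact Filter.mem_of_superset (Icc_mem_nhdsGE ht.2) (Set.Icc_subset_Icc_left ht.1)
    · intro t ht
      refine (norm_sum_le_of_le _ (fun j _ => hb_norm_le (u t j - u t i))).trans ?_
      rw [Finset.sum_const, Finset.card_erase_of_mem (Finset.mem_univ _), Finset.card_univ,
        Fintype.card_fin, nsmul_eq_mul, mul_one, Nat.cast_sub (by omega), Nat.cast_one]
  have hn1 : (0 : ℝ) ≤ (n : ℝ) - 1 := by
    have : (2 : ℝ) ≤ n := by exact_mod_cast hn
    linarith
  have hinf : 2 * T ≤ sInf {d : ℝ | ∃ i j : Fin n, i < j ∧ d = ‖u 0 i - u 0 j‖} := by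
    refine le_csInf ⟨_, ⟨0, by omega⟩, ⟨1, by omega⟩, by simp, rfl⟩ ?_
    rintro d ⟨i, j, hij, rfl⟩
    exact hpair i j hij.ne
  have hb : ((n : ℝ) - 1) * (T - 0) ≤
      (((n : ℝ) - 1) / 2) * sInf {d : ℝ | ∃ i j : Fin n, i < j ∧ d = ‖u 0 i - u 0 j‖} := by
    have := mul_le_mul_of_nonneg_left hinf hn1
    linarith
  refine le_trans ?_ hb
  refine Metric.hausdorffDist_le_of_mem_dist (mul_nonneg hn1 (by linarith)) ?_ ?_
  · rintro _ ⟨i, rfl⟩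
    exact ⟨u 0 i, ⟨i, rfl⟩, by rw [dist_eq_norm]; exact hmove i⟩
  · rintro _ ⟨i, rfl⟩
    exact ⟨u T i, ⟨i, rfl⟩, by rw [dist_comm, dist_eq_norm]; exact hmove i⟩
end

section
/- Let X be a metric space, n ≥ 2, and let A, B ⊆ X be nonempty finite subsets with A having exactly n elements and B having at most n elements. Let ρ ≥ 0 with d_H(A, B) ≤ ρ, and suppose δ(A) > 2ρ, where δ(S) denotes the minimum distance between two distinct points of S. Then B has exactly n elements and δ(B) ≥ δ(A) − 2ρ. -/
/-- If `A` has exactly `n` elements, `B` has at most `n` elements, `d_H(A, B) ≤ ρ`, and the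
minimal gap `δ(A) = min{dist a a' : a ≠ a' ∈ A}` satisfies `δ(A) > 2ρ`, then `B` has exactly
`n` elements and `δ(B) ≥ δ(A) − 2ρ`. -/
theorem separated_set_close_set_card_and_gap
    {X : Type*} [MetricSpace X] (n : ℕ) (hn : 2 ≤ n)
    (A B : Set X) (hAfin : A.Finite) (hBfin : B.Finite)
    (hAne : A.Nonempty) (hBne : B.Nonempty)
    (hAcard : A.ncard = n) (hBcard : B.ncard ≤ n)
    (ρ : ℝ) (hρ : 0 ≤ ρ) (hH : Metric.hausdorffDist A B ≤ ρ)
    (hgap : 2 * ρ < sInf {d : ℝ | ∃ a ∈ A, ∃ a' ∈ A, a ≠ a' ∧ d = dist a a'}) :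
    B.ncard = n ∧
      sInf {d : ℝ | ∃ a ∈ A, ∃ a' ∈ A, a ≠ a' ∧ d = dist a a'} - 2 * ρ ≤
        sInf {d : ℝ | ∃ b ∈ B, ∃ b' ∈ B, b ≠ b' ∧ d = dist b b'} := by
  set D := sInf {d : ℝ | ∃ a ∈ A, ∃ a' ∈ A, a ≠ a' ∧ d = dist a a'} with hD
  have hsep : ∀ a ∈ A, ∀ a' ∈ A, a ≠ a' → D ≤ dist a a' := by
    intro a ha a' ha' hne
    refine csInf_le ⟨0, ?_⟩ ⟨a, ha, a', ha', hne, rfl⟩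
    rintro d ⟨x, _, y, _, _, rfl⟩
    exact dist_nonneg
  have hfin : Metric.hausdorffEDist A B ≠ ⊤ :=
    Metric.hausdorffEDist_ne_top_of_nonempty_of_bounded hAne hBne hAfin.isBounded hBfin.isBounded
  have hex : ∀ a : X, ∃ b, a ∈ A → b ∈ B ∧ dist a b ≤ ρ := by
    intro a
    obtain ⟨b, hb, hab⟩ := hBfin.isCompact.exists_infDist_eq_dist hBne a
    refine ⟨b, fun ha => ⟨hb, ?_⟩⟩
    rw [← hab]
    exact (Metric.infDist_le_hausdorffDist_of_mem ha hfin).trans hH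
  choose f hf using hex
  have hinj : Set.InjOn f A := by
    intro a ha a' ha' h
    by_contra hne
    have h1 := (hf a ha).2
    have h2 := (hf a' ha').2
    have h3 := hsep a ha a' ha' hne
    have h4 := dist_triangle_right a a' (f a)
    rw [← h] at h2
    linarith
  have himg : f '' A = B := by
    apply Set.eq_of_subset_of_ncard_le _ _ hBfin
    · rintro _ ⟨a, ha, rfl⟩
      exact (hf a ha).1
    · rw [Set.ncard_image_of_injOn hinj, hAcard]
      exact hBcard
  have hcard : B.ncard = n := by
    rw [← himg, Set.ncard_image_of_injOn hinj, hAcard]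
  refine ⟨hcard, le_csInf ?_ ?_⟩
  · obtain ⟨b, hb, b', hb', hne⟩ := (Set.one_lt_ncard hBfin).1 (by omega : 1 < B.ncard)
    exact ⟨_, b, hb, b', hb', hne, rfl⟩
  · rintro d ⟨b, hb, b', hb', hne, rfl⟩
    rw [← himg] at hb hb'
    obtain ⟨a, ha, rfl⟩ := hb
    obtain ⟨a', ha', rfl⟩ := hb'
    have h1 := (hf a ha).2
    have h2 := (hf a' ha').2
    have h3 := hsep a ha a' ha' (fun h => hne (by rw [h]))
    have h4 := dist_triangle4 a (f a) (f a') a'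
    rw [dist_comm (f a') a'] at h4
    linarith
end

section
/- Let X be a metric space, n ≥ 2, and let A, B ⊆ X be nonempty finite subsets with A having exactly n elements and B having at most n elements. Let ρ ≥ 0 with d_H(A, B) ≤ ρ, and suppose every two distinct points of A are at distance greater than 2ρ. Then there exists a bijection f : A → B such that dist(a, f(a)) ≤ ρ for every a ∈ A. -/
/-- **Inequality (10).** If `A` has exactly `n` elements, `B` has at most `n` elements,
`d_H(A, B) ≤ ρ`, and any two distinct points of `A` are at distance greater than `2ρ`, then
there is a bijection `f` from `A` onto `B` with `dist a (f a) ≤ ρ` for every `a ∈ A`. -/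
theorem close_enumeration_of_separated_sets
    {X : Type*} [MetricSpace X] (n : ℕ) (hn : 2 ≤ n)
    (A B : Set X) (hAfin : A.Finite) (hBfin : B.Finite)
    (hAne : A.Nonempty) (hBne : B.Nonempty)
    (hAcard : A.ncard = n) (hBcard : B.ncard ≤ n)
    (ρ : ℝ) (hρ : 0 ≤ ρ) (hH : Metric.hausdorffDist A B ≤ ρ)
    (hsep : ∀ a ∈ A, ∀ a' ∈ A, a ≠ a' → 2 * ρ < dist a a') :
    ∃ f : X → X, Set.BijOn f A B ∧ ∀ a ∈ A, dist a (f a) ≤ ρ := by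
  have fin := Metric.hausdorffEDist_ne_top_of_nonempty_of_bounded hAne hBne
    hAfin.isBounded hBfin.isBounded
  have key : ∀ a : X, ∃ b, a ∈ A → b ∈ B ∧ dist a b ≤ ρ := by
    intro a
    obtain ⟨b, hb, hd⟩ := hBfin.isCompact.exists_infDist_eq_dist hBne a
    refine ⟨b, fun ha => ⟨hb, ?_⟩⟩
    rw [← hd]
    exact (Metric.infDist_le_hausdorffDist_of_mem ha fin).trans hH
  choose f hf using key
  have hmaps : Set.MapsTo f A B := fun a ha => (hf a ha).1
  have hinj : Set.InjOn f A := by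
    intro a ha a' ha' h
    by_contra hne
    have h1 := hsep a ha a' ha' hne
    have h2 := (hf a ha).2
    have h3 := (hf a' ha').2
    rw [← h] at h3
    have h4 := dist_triangle_right a a' (f a)
    linarith
  have himg : f '' A = B := by
    apply Set.eq_of_subset_of_ncard_le hmaps.image_subset _ hBfin
    rw [Set.ncard_image_of_injOn hinj]
    omega
  exact ⟨f, ⟨hmaps, hinj, himg.ge⟩, fun a ha => (hf a ha).2⟩
end

section
/- Let X be a real normed vector space. The midpoint map sending {a, b} to {(a+b)/2} is a 1-Lipschitz retraction of X(2) onto X(1): for all a, b, c, d ∈ X, ‖(a+b)/2 − (c+d)/2‖ ≤ d_H({a, b}, {c, d}), and the map sends each singleton {a} to itself. -/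
/-- In a real normed vector space `X`, the midpoint map `{a, b} ↦ {(a+b)/2}` is a
`1`-Lipschitz retraction of `X(2)` onto `X(1)`: for all `a, b, c, d`,
`‖(a+b)/2 − (c+d)/2‖ ≤ d_H({a, b}, {c, d})`, and each singleton `{a}` is sent to itself. -/
theorem midpoint_map_one_lipschitz_retraction
    {X : Type*} [NormedAddCommGroup X] [NormedSpace ℝ X] :
    (∀ a b c d : X,
      ‖(2 : ℝ)⁻¹ • (a + b) - (2 : ℝ)⁻¹ • (c + d)‖ ≤
        Metric.hausdorffDist ({a, b} : Set X) ({c, d} : Set X)) ∧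
    (∀ a : X, ({(2 : ℝ)⁻¹ • (a + a)} : Set X) = ({a} : Set X)) := by
  constructor
  · intro a b c d
    have key : ∀ (r : ℝ) (p q u v : X), dist p u < r → dist q v < r →
        ‖(2 : ℝ)⁻¹ • (p + q) - (2 : ℝ)⁻¹ • (u + v)‖ ≤ r := by
      intro r p q u v h1 h2
      rw [dist_eq_norm] at h1 h2
      have e : (2 : ℝ)⁻¹ • (p + q) - (2 : ℝ)⁻¹ • (u + v)
          = (2 : ℝ)⁻¹ • ((p - u) + (q - v)) := by module
      rw [e, norm_smul]
      have h3 := norm_add_le (p - u) (q - v)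
      have h4 : ‖(2 : ℝ)⁻¹‖ = 2⁻¹ := by norm_num
      rw [h4]
      linarith
    refine le_of_forall_gt_imp_ge_of_dense fun r hr => ?_
    have fin : Metric.hausdorffEDist ({a, b} : Set X) ({c, d} : Set X) ≠ ⊤ :=
      Metric.hausdorffEDist_ne_top_of_nonempty_of_bounded ⟨a, by simp⟩ ⟨c, by simp⟩
        (Set.toFinite _).isBounded (Set.toFinite _).isBounded
    have l : ∀ x ∈ ({a, b} : Set X), dist x c < r ∨ dist x d < r := by
      intro x hx
      obtain ⟨y, hy, h⟩ := Metric.exists_dist_lt_of_hausdorffDist_lt hx hr fin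
      rcases hy with rfl | rfl
      · exact Or.inl h
      · exact Or.inr h
    have l' : ∀ y ∈ ({c, d} : Set X), dist a y < r ∨ dist b y < r := by
      intro y hy
      obtain ⟨x, hx, h⟩ := Metric.exists_dist_lt_of_hausdorffDist_lt' hy hr fin
      rcases hx with rfl | rfl
      · exact Or.inl h
      · exact Or.inr h
    have ha := l a (by simp)
    have hb := l b (by simp)
    have hc := l' c (by simp)
    have hd := l' d (by simp)
    have hm : (dist a c < r ∧ dist b d < r) ∨ (dist a d < r ∧ dist b c < r) := by tauto
    rcases hm with ⟨h1, h2⟩ | ⟨h1, h2⟩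
    · exact key r a b c d h1 h2
    · rw [add_comm c d]
      exact key r a b d c h1 h2
  · intro a
    congr 1
    module
end
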